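/- (Siegel's formula, degree 1.) Let m be a positive integer divisible by 8. Call two positive definite even unimodular m×m matrices S, S' equivalent if S' = UᵀSU for some U ∈ GL_m(ℤ), and for such S let g_S = #{U ∈ GL_m(ℤ) : UᵀSU = S} (a finite number). Let R be a finite set of positive definite even unimodular m×m matrices containing exactly one member of each equivalence class, and set M_m = Σ_{S∈R} 1/g_S. Then for all τ in the upper half-plane ℍ: Σ_{S∈R} (1/g_S)·θ_S(τ) = M_m·E_{m/2}(τ), where E_{m/2}(τ) = Σ_{γ ∈ Γ∞\SL₂(ℤ)} j(γ,τ)^{−m/2}. -/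

import Mathlib

open Complex Real Set
open scoped MatrixGroups Matrix

noncomputable section

/-- The upper half-plane, as a subset of `ℂ`. -/
def UHP : Set ℂ := {τ | 0 < τ.im}

/-- The subgroup `Γ∞ = {(a b; 0 d) ∈ SL₂(ℤ)}` of upper triangular matrices. -/
def GammaInf : Subgroup SL(2, ℤ) where
  carrier := {γ | γ.1 1 0 = 0}
  one_mem' := by simp
  mul_mem' := by
    intro x y hx hy
    have h := (Matrix.two_mul_expl x.1 y.1).2.2.1
    simp only [Set.mem_setOf_eq] at *
    simp [Matrix.SpecialLinearGroup.coe_mul, h, hx, hy]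
  inv_mem' := by
    intro x hx
    simp only [Set.mem_setOf_eq] at *
    rw [Matrix.SpecialLinearGroup.SL2_inv_expl x]
    simpa using hx

/-- The square `j(γ,τ)² = (cτ+d)²` of the automorphy factor, as a well-defined function on
the set `Γ∞\SL₂(ℤ)` of right cosets `Γ∞γ` (it is insensitive to the sign ambiguity
`(c,d) ↦ (-c,-d)` coming from left multiplication by `Γ∞`). -/
def jsq (τ : ℂ) : Quotient (QuotientGroup.rightRel GammaInf) → ℂ :=
  Quotient.lift
    (fun γ : SL(2, ℤ) => (((γ.1 1 0 : ℤ) : ℂ) * τ + ((γ.1 1 1 : ℤ) : ℂ)) ^ 2)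
    (by
      intro x y hxy
      have h : y * x⁻¹ ∈ GammaInf := QuotientGroup.rightRel_apply.mp hxy
      set η : SL(2, ℤ) := y * x⁻¹ with hη
      have hyx : y = η * x := by rw [hη]; group
      have hη10 : η.1 1 0 = 0 := h
      have h10 : y.1 1 0 = η.1 1 1 * x.1 1 0 := by
        have h2 := (Matrix.two_mul_expl η.1 x.1).2.2.1
        rw [hyx]
        simp only [Matrix.SpecialLinearGroup.coe_mul]
        rw [h2, hη10]; ring
      have h11 : y.1 1 1 = η.1 1 1 * x.1 1 1 := by
        have h2 := (Matrix.two_mul_expl η.1 x.1).2.2.2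
        rw [hyx]
        simp only [Matrix.SpecialLinearGroup.coe_mul]
        rw [h2, hη10]; ring
      have hdet : η.1 0 0 * η.1 1 1 = 1 := by
        have hd := η.2
        rw [Matrix.det_fin_two] at hd
        rw [hη10] at hd; linarith
      have hsq : (((η.1 1 1 : ℤ) : ℂ)) ^ 2 = 1 := by
        have hdet' : η.1 1 1 * η.1 0 0 = 1 := by linarith
        rcases Int.eq_one_or_neg_one_of_mul_eq_one hdet' with h1 | h1 <;>
          rw [h1] <;> norm_num
      have hkey : ((y.1 1 0 : ℤ) : ℂ) * τ + ((y.1 1 1 : ℤ) : ℂ)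
          = ((η.1 1 1 : ℤ) : ℂ) * (((x.1 1 0 : ℤ) : ℂ) * τ + ((x.1 1 1 : ℤ) : ℂ)) := by
        rw [h10, h11]; push_cast; ring
      show (((x.1 1 0 : ℤ) : ℂ) * τ + ((x.1 1 1 : ℤ) : ℂ)) ^ 2
          = (((y.1 1 0 : ℤ) : ℂ) * τ + ((y.1 1 1 : ℤ) : ℂ)) ^ 2
      rw [hkey, mul_pow, hsq, one_mul])

/-- The weight-`w` Eisenstein series `E_w(τ) = ∑_{γ ∈ Γ∞\SL₂(ℤ)} j(γ,τ)^{-w}`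
(for even `w`, written via `j(γ,τ)^{-w} = (j(γ,τ)²)^{-w/2}`). -/
def Ewt (w : ℕ) (τ : ℂ) : ℂ :=
  ∑' q : Quotient (QuotientGroup.rightRel GammaInf), jsq τ q ^ (-((w : ℤ) / 2))


/-- `S ∈ M_m(ℤ)` is positive definite even unimodular: symmetric, positive definite (as a
real matrix), of determinant one, with all diagonal entries even. -/
def IsPosDefEvenUnimodular {m : ℕ} (S : Matrix (Fin m) (Fin m) ℤ) : Prop :=
  S.IsSymm ∧ (S.map ((↑) : ℤ → ℝ)).PosDef ∧ S.det = 1 ∧ ∀ i, Even (S i i)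

/-- The theta series `θ_S(τ) = ∑_{x ∈ ℤ^m} e^{πiτ xᵀSx}` of an integral matrix `S`. -/
def thetaSeries {m : ℕ} (S : Matrix (Fin m) (Fin m) ℤ) (τ : ℂ) : ℂ :=
  ∑' x : Fin m → ℤ, Complex.exp (π * I * τ * ((x ⬝ᵥ S.mulVec x : ℤ) : ℂ))

/-- Two integral matrices `S`, `S'` are equivalent if `S' = Uᵀ S U` for some
`U ∈ GL_m(ℤ)`. -/
def MatEquiv {m : ℕ} (S S' : Matrix (Fin m) (Fin m) ℤ) : Prop :=
  ∃ U : Matrix (Fin m) (Fin m) ℤ, IsUnit U.det ∧ S' = Uᵀ * S * U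

/-- `g_S`, the (finite) number of units `U ∈ GL_m(ℤ)` with `Uᵀ S U = S`, i.e. the order of
the automorphism group of `S`. -/
def autCard {m : ℕ} (S : Matrix (Fin m) (Fin m) ℤ) : ℕ :=
  Nat.card {U : Matrix (Fin m) (Fin m) ℤ // IsUnit U.det ∧ Uᵀ * S * U = S}

/-! The Hecke operator `T_p`, for an odd prime `p`, acts on functions of weight `k = m / 2`.
Counting the sublattices of `(ℤ^m, S)` equal to their dual for the form `p⁻¹ xᵀSy` in two ways, by
their class and by the vectors they contain, expresses `T_p θ_S` through the theta series of the
classes of `p`-neighbours of `S`. Modulo `p` these sublattices are the Lagrangians of a split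
quadratic space, so their number is known; as the adjoint of a similitude is a similitude, the
weights `1 / g_S` make the average `∑ θ_S / g_S` an eigenfunction of `T_p`, with eigenvalue
`p^(k-1) + 1`. The Eisenstein series has the same eigenvalue. The difference of the two sides
is therefore an eigenfunction, and it is also a cusp form of level one, hence `O(y^(-k/2))`. Such a
bound grows by a factor of at most `p^(k/2-1) + p^(k/2)` under `T_p`, which for `p = 3` is less than
`p^(k-1) + 1`, so the difference is zero. -/

section QuadraticForm

variable {ι R : Type*} [Fintype ι] [CommRing R]

lemma mulVec_dotProduct_mulVec_mulVec (B S : Matrix ι ι R) (x y : ι → R) :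
    (B *ᵥ x) ⬝ᵥ S *ᵥ (B *ᵥ y) = x ⬝ᵥ (Bᵀ * S * B) *ᵥ y := by
  rw [← Matrix.vecMul_transpose B x, ← Matrix.dotProduct_mulVec, Matrix.mulVec_mulVec,
    Matrix.mulVec_mulVec]

lemma exists_eq_mul_of_range_le {A B : Matrix ι ι R}
    (h : LinearMap.range A.mulVecLin ≤ LinearMap.range B.mulVecLin) : ∃ X, A = B * X := by
  classical
  choose X hX using fun j ↦ h ⟨Pi.single j 1, rfl⟩
  refine ⟨(Matrix.of X)ᵀ, Matrix.ext_of_mulVec_single fun j ↦ ?_⟩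
  rw [← Matrix.mulVec_mulVec, Matrix.mulVec_single_one (Matrix.of X)ᵀ]
  exact (hX j).symm

lemma dotProduct_mulVec_comm {S : Matrix ι ι R} (hS : S.IsSymm) (x y : ι → R) :
    x ⬝ᵥ S *ᵥ y = y ⬝ᵥ S *ᵥ x := by
  rw [dotProduct_comm, Matrix.dotProduct_mulVec y, ← Matrix.mulVec_transpose, hS.eq]

lemma intCast_dotProduct_mulVec (S : Matrix ι ι ℤ) (x y : ι → ℤ) :
    ((x ⬝ᵥ S *ᵥ y : ℤ) : R) = (fun i ↦ (x i : R)) ⬝ᵥ S.map ((↑) : ℤ → R) *ᵥ fun i ↦ (y i : R) := by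
  simp [dotProduct, Matrix.mulVec]

lemma even_dotProduct_mulVec_self {S : Matrix ι ι ℤ} (hS : S.IsSymm) (hev : ∀ i, Even (S i i))
    (x : ι → ℤ) : Even (x ⬝ᵥ S *ᵥ x) := by
  have hsum : x ⬝ᵥ S *ᵥ x = ∑ ij : ι × ι, x ij.1 * S ij.1 ij.2 * x ij.2 := by
    simp only [dotProduct, Matrix.mulVec, Finset.mul_sum, Fintype.sum_prod_type, mul_assoc]
  rw [hsum, ← ZMod.intCast_eq_zero_iff_even, Int.cast_sum]
  -- modulo `2`, the terms at `(i, j)` and `(j, i)` cancel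
  refine Finset.sum_involution (fun ij _ ↦ ij.swap) ?_ ?_ (fun _ _ ↦ Finset.mem_univ _)
    fun _ _ ↦ rfl
  · rintro ⟨i, j⟩ -
    dsimp only [Prod.swap]
    rw [hS.apply i j, ← Int.cast_add, ZMod.intCast_eq_zero_iff_even]
    exact ⟨x i * S i j * x j, by ring⟩
  · rintro ⟨i, j⟩ - hne hswap
    obtain rfl : j = i := (Prod.ext_iff.mp hswap).1
    exact hne ((ZMod.intCast_eq_zero_iff_even).mpr (((hev j).mul_left _).mul_right _))

end QuadraticForm

section Gaussian

lemma summable_pi_prod {ι : Type*} {f : ι → ℝ} (hf : ∀ i, 0 ≤ f i) (hs : Summable f) (m : ℕ) :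
    Summable fun x : Fin m → ι ↦ ∏ i, f (x i) := by
  induction m with
  | zero => exact Summable.of_finite
  | succ m ih =>
    rw [← (Fin.consEquiv fun _ ↦ ι).summable_iff]
    exact (hs.mul_of_nonneg ih hf fun x ↦ Finset.prod_nonneg fun i _ ↦ hf _).congr fun x ↦ by
      simp [Fin.consEquiv, Fin.prod_univ_succ]

lemma summable_exp_neg_mul_sq {a : ℝ} (ha : 0 < a) : Summable fun n : ℤ ↦ rexp (-a * n ^ 2) := by
  have h : Summable fun n : ℕ ↦ rexp (-a * n ^ 2) := by
    refine Summable.of_nonneg_of_le (fun _ ↦ (Real.exp_pos _).le) (fun n ↦ ?_)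
      (Real.summable_exp_nat_mul_iff.mpr (neg_neg_of_pos ha))
    have : (n : ℝ) ≤ n ^ 2 := mod_cast Nat.le_self_pow two_ne_zero n
    exact Real.exp_le_exp.mpr (by nlinarith)
  exact Summable.of_nat_of_neg (by simpa using h) (by simpa using h)

lemma summable_exp_neg_mul_dotProduct_self (m : ℕ) {a : ℝ} (ha : 0 < a) :
    Summable fun x : Fin m → ℤ ↦ rexp (-a * ((x ⬝ᵥ x : ℤ) : ℝ)) := by
  refine (summable_pi_prod (fun _ ↦ (Real.exp_pos _).le) (summable_exp_neg_mul_sq ha) m).congr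
    fun x ↦ ?_
  rw [← Real.exp_sum, ← Finset.mul_sum]
  simp [dotProduct, sq]

open scoped MatrixOrder Matrix.Norms.L2Operator in
lemma exists_pos_mul_dotProduct_self_le {ι : Type*} [Fintype ι] {A : Matrix ι ι ℝ}
    (hA : A.PosDef) : ∃ c : ℝ, 0 < c ∧ ∀ x : ι → ℝ, c * (x ⬝ᵥ x) ≤ x ⬝ᵥ A *ᵥ x := by
  classical
  cases isEmpty_or_nonempty ι
  · exact ⟨1, one_pos, fun x ↦ by simp [dotProduct]⟩
  obtain ⟨c, hc, hcA⟩ := (CFC.exists_pos_algebraMap_le_iff (a := A) hA.isHermitian).mpr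
    fun x hx ↦ by
      rw [hA.isHermitian.spectrum_real_eq_range_eigenvalues] at hx
      obtain ⟨i, rfl⟩ := hx
      exact hA.eigenvalues_pos i
  refine ⟨c, hc, fun x ↦ ?_⟩
  have := (Matrix.le_iff.mp hcA).dotProduct_mulVec_nonneg x
  simpa [Matrix.sub_mulVec, Algebra.algebraMap_eq_smul_one, Matrix.smul_mulVec] using this

variable {m : ℕ} {S : Matrix (Fin m) (Fin m) ℤ}

lemma summable_exp_neg_mul_quadForm (hS : (S.map ((↑) : ℤ → ℝ)).PosDef) {a : ℝ} (ha : 0 < a) :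
    Summable fun x : Fin m → ℤ ↦ rexp (-a * ((x ⬝ᵥ S *ᵥ x : ℤ) : ℝ)) := by
  obtain ⟨c, hc, h⟩ := exists_pos_mul_dotProduct_self_le hS
  refine Summable.of_nonneg_of_le (fun _ ↦ (Real.exp_pos _).le) (fun x ↦ ?_)
    (summable_exp_neg_mul_dotProduct_self m (mul_pos ha hc))
  have hx : c * ((x ⬝ᵥ x : ℤ) : ℝ) ≤ ((x ⬝ᵥ S *ᵥ x : ℤ) : ℝ) := by
    rw [intCast_dotProduct_mulVec]
    simpa [dotProduct] using h fun i ↦ x i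
  exact Real.exp_le_exp.mpr (by nlinarith)

lemma finite_setOf_quadForm_le (hS : (S.map ((↑) : ℤ → ℝ)).PosDef) (C : ℤ) :
    {x : Fin m → ℤ | x ⬝ᵥ S *ᵥ x ≤ C}.Finite := by
  have h := (summable_exp_neg_mul_quadForm hS one_pos).tendsto_cofinite_zero.eventually
    (gt_mem_nhds (Real.exp_pos (-1 * (C : ℝ))))
  refine (Filter.eventually_cofinite.mp h).subset fun x (hx : x ⬝ᵥ S *ᵥ x ≤ C) ↦ ?_
  simpa using hx

lemma finite_setOf_transpose_mul_mul_eq (hS : (S.map ((↑) : ℤ → ℝ)).PosDef)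
    (T : Matrix (Fin m) (Fin m) ℤ) : {B : Matrix (Fin m) (Fin m) ℤ | Bᵀ * S * B = T}.Finite := by
  refine Set.Finite.of_injOn (f := fun B j ↦ B.col j) ?_
    (fun B _ C _ hBC ↦ Matrix.ext fun i j ↦ congrFun (congrFun hBC j) i)
    (Set.Finite.pi fun j ↦ finite_setOf_quadForm_le hS (T j j))
  rintro B rfl j -
  simp only [Set.mem_ofPred_eq]
  rw [← Matrix.mulVec_single_one, mulVec_dotProduct_mulVec_mulVec]
  simp

end Gaussian

section Lagrangians

open Module
open LinearMap (BilinForm)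

variable {F V : Type*} [Field F] [AddCommGroup V] [Module F V]

/-- A Lagrangian of a bilinear form: a subspace equal to its own orthogonal complement. For a
symmetric form over a field of characteristic different from two these are the maximal totally
isotropic subspaces of half the dimension. -/
def IsLagrangian (B : BilinForm F V) (W : Submodule F V) : Prop :=
  B.orthogonal W = W

/-- The pair `v, u` spans a hyperbolic plane, of which it is the standard basis. -/
structure IsHyperbolicPair (B : BilinForm F V) (v u : V) : Prop where
  left : B v v = 0
  right : B u u = 0
  pairing : B v u = 1

/-- The orthogonal complement of the plane spanned by `v` and `u`. -/
def hyperbolicCompl (B : BilinForm F V) (v u : V) : Submodule F V :=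
  LinearMap.ker (B v) ⊓ LinearMap.ker (B u)

variable {B : BilinForm F V} {v u : V}

lemma exists_isHyperbolicPair (h2 : (2 : F) ≠ 0) (hB : B.IsSymm) (hnd : B.Nondegenerate)
    (hv0 : v ≠ 0) (hv : B v v = 0) : ∃ u, IsHyperbolicPair B v u := by
  obtain ⟨w, hw⟩ : ∃ w, B v w ≠ 0 := by
    by_contra! h
    exact hv0 (hnd.1 v h)
  set w' := (B v w)⁻¹ • w
  have hw' : B v w' = 1 := by simp [w', hw]
  refine ⟨w' - (B w' w' / 2) • v, hv, ?_, by simp [hw', hv]⟩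
  simp only [map_sub, map_smul, LinearMap.sub_apply, LinearMap.smul_apply, smul_eq_mul, hv,
    hB.eq w' v, hw']
  field_simp
  ring

lemma IsLagrangian.mem_iff {W : Submodule F V} (hW : IsLagrangian B W) {x : V} :
    x ∈ W ↔ ∀ w ∈ W, B w x = 0 := by
  conv_lhs => rw [← hW]
  rfl

lemma IsLagrangian.two_mul_finrank [FiniteDimensional F V] (hnd : B.Nondegenerate)
    {W : Submodule F V} (hW : IsLagrangian B W) : 2 * finrank F W = finrank F V := by
  have := LinearMap.BilinForm.finrank_orthogonal hnd W
  rw [hW] at this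
  have := W.finrank_le
  lia

namespace IsHyperbolicPair

lemma pairing_symm (h : IsHyperbolicPair B v u) (hB : B.IsSymm) : B u v = 1 := by
  rw [hB.eq, h.pairing]

/-- The splitting `V ≃ F v ⊕ F u ⊕ ⟨v, u⟩ᗮ` given by a hyperbolic pair. -/
def splitting (h : IsHyperbolicPair B v u) (hB : B.IsSymm) :
    V ≃ₗ[F] (F × F) × hyperbolicCompl B v u where
  toFun x := ((B u x, B v x), ⟨x - B u x • v - B v x • u, by
    simp [hyperbolicCompl, h.left, h.right, h.pairing, h.pairing_symm hB]⟩)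
  map_add' x y := by
    ext <;> simp only [map_add, Prod.fst_add, Prod.snd_add, Submodule.coe_add]
    module
  map_smul' c x := by
    ext <;> simp only [map_smul, smul_eq_mul, Prod.smul_fst, Prod.smul_snd, RingHom.id_apply,
      Submodule.coe_smul]
    module
  invFun z := z.1.1 • v + z.1.2 • u + z.2
  left_inv x := by module
  right_inv := by
    rintro ⟨⟨a, b⟩, ⟨y, hy₁, hy₂⟩⟩
    have hvy : B v y = 0 := hy₁
    have huy : B u y = 0 := hy₂
    ext
    · simp [h.right, h.pairing_symm hB, huy]
    · simp [h.left, h.pairing, hvy]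
    · simp [h.left, h.right, h.pairing, h.pairing_symm hB, hvy, huy, add_sub_right_comm]

@[simp]
lemma splitting_symm_apply (h : IsHyperbolicPair B v u) (hB : B.IsSymm)
    (z : (F × F) × hyperbolicCompl B v u) :
    (h.splitting hB).symm z = z.1.1 • v + z.1.2 • u + z.2 := rfl

lemma apply_splitting_symm (h : IsHyperbolicPair B v u) (hB : B.IsSymm)
    (z t : (F × F) × hyperbolicCompl B v u) :
    B ((h.splitting hB).symm z) ((h.splitting hB).symm t) =
      z.1.1 * t.1.2 + z.1.2 * t.1.1 + B z.2 t.2 := by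
  obtain ⟨⟨a, b⟩, ⟨y, hy₁, hy₂⟩⟩ := z
  obtain ⟨⟨c, d⟩, ⟨w, hw₁, hw₂⟩⟩ := t
  have hvw : B v w = 0 := hw₁
  have huw : B u w = 0 := hw₂
  have hyv : B y v = 0 := (hB.eq _ _).trans hy₁
  have hyu : B y u = 0 := (hB.eq _ _).trans hy₂
  simp [h.left, h.right, h.pairing, h.pairing_symm hB, hvw, huw, hyv, hyu]

lemma nondegenerate_restrict_hyperbolicCompl (h : IsHyperbolicPair B v u) (hB : B.IsSymm)
    (hnd : B.Nondegenerate) : (B.restrict (hyperbolicCompl B v u)).Nondegenerate := by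
  refine (LinearMap.IsRefl.nondegenerate_iff_separatingLeft
    (hB.restrict _).isRefl).mpr fun y hy ↦ Subtype.ext (hnd.1 y fun x ↦ ?_)
  obtain ⟨z, rfl⟩ := (h.splitting hB).symm.surjective x
  have := h.apply_splitting_symm hB (0, y) z
  simp only [splitting_symm_apply, Prod.fst_zero, Prod.snd_zero, zero_smul, zero_add, zero_mul]
    at this
  exact this.trans (hy z.2)

lemma finrank_eq [FiniteDimensional F V] (h : IsHyperbolicPair B v u) (hB : B.IsSymm) :
    finrank F V = finrank F (hyperbolicCompl B v u) + 2 := by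
  rw [(h.splitting hB).finrank_eq, finrank_prod, finrank_prod, finrank_self, add_comm]

lemma splitting_symm_mem_iff (h : IsHyperbolicPair B v u) (hB : B.IsSymm) {W : Submodule F V}
    (hW : IsLagrangian B W) (hv : v ∈ W) (z : (F × F) × hyperbolicCompl B v u) :
    (h.splitting hB).symm z ∈ W ↔ z.1.2 = 0 ∧ (z.2 : V) ∈ W := by
  have hsnd : B v ((h.splitting hB).symm z) = z.1.2 := by
    simpa using h.apply_splitting_symm hB ((1, 0), 0) z
  constructor
  · intro hz
    have hz₂ : z.1.2 = 0 := hsnd.symm.trans (hW.mem_iff.mp hz v hv)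
    refine ⟨hz₂, ?_⟩
    rwa [splitting_symm_apply, hz₂, zero_smul, add_zero,
      W.add_mem_iff_right (W.smul_mem _ hv)] at hz
  · rintro ⟨hz₂, hz⟩
    rw [splitting_symm_apply, hz₂, zero_smul, add_zero]
    exact W.add_mem (W.smul_mem _ hv) hz

/-- The sum of the line of `v` and a subspace of the complement of the plane. -/
def lineSup (h : IsHyperbolicPair B v u) (hB : B.IsSymm)
    (L : Submodule F (hyperbolicCompl B v u)) : Submodule F V :=
  (((⊤ : Submodule F F).prod ⊥).prod L).comap (h.splitting hB).toLinearMap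

lemma splitting_symm_mem_lineSup (h : IsHyperbolicPair B v u) (hB : B.IsSymm)
    {L : Submodule F (hyperbolicCompl B v u)} {z : (F × F) × hyperbolicCompl B v u} :
    (h.splitting hB).symm z ∈ h.lineSup hB L ↔ z.1.2 = 0 ∧ z.2 ∈ L := by
  rw [lineSup, Submodule.mem_comap, LinearEquiv.coe_coe, LinearEquiv.apply_symm_apply]
  simp

lemma left_mem_lineSup (h : IsHyperbolicPair B v u) (hB : B.IsSymm)
    (L : Submodule F (hyperbolicCompl B v u)) : v ∈ h.lineSup hB L := by
  simpa using (h.splitting_symm_mem_lineSup hB (L := L) (z := ((1, 0), 0))).mpr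
    ⟨rfl, L.zero_mem⟩

lemma isLagrangian_lineSup (h : IsHyperbolicPair B v u) (hB : B.IsSymm)
    {L : Submodule F (hyperbolicCompl B v u)} (hL : IsLagrangian (B.restrict _) L) :
    IsLagrangian B (h.lineSup hB L) := by
  ext x
  obtain ⟨z, rfl⟩ := (h.splitting hB).symm.surjective x
  rw [splitting_symm_mem_lineSup, hL.mem_iff]
  constructor
  · intro hz
    have hzt (t : (F × F) × hyperbolicCompl B v u) (ht : t.1.2 = 0 ∧ t.2 ∈ L) :
        t.1.1 * z.1.2 + t.1.2 * z.1.1 + B t.2 z.2 = 0 :=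
      (h.apply_splitting_symm hB t z).symm.trans
        (hz _ ((h.splitting_symm_mem_lineSup hB).mpr ht))
    exact ⟨by simpa using hzt ((1, 0), 0) ⟨rfl, L.zero_mem⟩,
      fun y hy ↦ by simpa using hzt (0, y) ⟨rfl, hy⟩⟩
  · rintro ⟨hz₂, hz⟩ x hx
    obtain ⟨t, rfl⟩ := (h.splitting hB).symm.surjective x
    obtain ⟨ht₂, ht⟩ := (h.splitting_symm_mem_lineSup hB).mp hx
    rw [h.apply_splitting_symm, hz₂, ht₂, mul_zero, zero_mul, zero_add,
      zero_add]
    exact hz t.2 ht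

lemma isLagrangian_comap_subtype (h : IsHyperbolicPair B v u) (hB : B.IsSymm)
    {W : Submodule F V} (hW : IsLagrangian B W) (hv : v ∈ W) :
    IsLagrangian (B.restrict _) (W.comap (hyperbolicCompl B v u).subtype) := by
  ext y
  rw [Submodule.mem_comap, Submodule.subtype_apply, hW.mem_iff]
  refine ⟨fun hy x hx ↦ ?_, fun hy w hw ↦ hy w hw⟩
  obtain ⟨z, rfl⟩ := (h.splitting hB).symm.surjective x
  obtain ⟨hz₂, hz⟩ := (h.splitting_symm_mem_iff hB hW hv z).mp hx
  have := h.apply_splitting_symm hB z (0, y)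
  simp only [hz₂, splitting_symm_apply, Prod.fst_zero, Prod.snd_zero, zero_smul, zero_add,
    mul_zero] at this ⊢
  exact this.trans (hy z.2 hz)

/-- The bijection between the Lagrangians through `v` and the Lagrangians of the complement of
the plane spanned by `v` and `u`. -/
def lagrangianEquiv (h : IsHyperbolicPair B v u) (hB : B.IsSymm) :
    {W : Submodule F V // IsLagrangian B W ∧ v ∈ W} ≃
      {L : Submodule F (hyperbolicCompl B v u) // IsLagrangian (B.restrict _) L} where
  toFun W := ⟨W.1.comap (hyperbolicCompl B v u).subtype,
    h.isLagrangian_comap_subtype hB W.2.1 W.2.2⟩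
  invFun L := ⟨h.lineSup hB L.1, h.isLagrangian_lineSup hB L.2, h.left_mem_lineSup hB L.1⟩
  left_inv W := by
    ext x
    obtain ⟨z, rfl⟩ := (h.splitting hB).symm.surjective x
    rw [splitting_symm_mem_lineSup, h.splitting_symm_mem_iff hB W.2.1 W.2.2]
    rfl
  right_inv L := by
    ext y
    simpa using h.splitting_symm_mem_lineSup hB (L := L.1) (z := (0, y))

end IsHyperbolicPair

/-- The form has as many isotropic vectors as an orthogonal sum of `k` hyperbolic planes, that is
`q ^ (2 * k - 1) + q ^ k - q ^ (k - 1)` over a field with `q` elements. The equation is multiplied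
by `q` and rearranged so that it makes sense in `ℕ` for `k = 0` too. -/
def HasHyperbolicCount (B : BilinForm F V) (k : ℕ) : Prop :=
  Nat.card F * Nat.card {x : V // B x x = 0} + Nat.card F ^ k =
    Nat.card F ^ (2 * k) + Nat.card F ^ (k + 1)

variable [Finite F]

lemma card_two_mul_mul_eq (h2 : (2 : F) ≠ 0) (c : F) [Decidable (c = 0)] :
    Nat.card {z : F × F // 2 * (z.1 * z.2) = c} + 1 =
      Nat.card F + if c = 0 then Nat.card F else 0 := by
  have := Fintype.ofFinite F
  classical
  have hfib (b : F) : Nat.card {a : F // 2 * (a * b) = c} =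
      if b = 0 then (if c = 0 then Nat.card F else 0) else 1 := by
    split_ifs with hb hc
    · simp [hb, hc]
    · simp [hb, Ne.symm hc]
    · rw [Nat.card_eq_one_iff_exists]
      refine ⟨⟨c / (2 * b), by field_simp⟩, fun ⟨a, ha⟩ ↦ Subtype.ext ?_⟩
      exact eq_div_of_mul_eq (mul_ne_zero h2 hb) (by linear_combination ha)
  let e : {z : F × F // 2 * (z.1 * z.2) = c} ≃ Σ b : F, {a : F // 2 * (a * b) = c} :=
    { toFun z := ⟨z.1.2, z.1.1, z.2⟩
      invFun z := ⟨(z.2.1, z.1), z.2.2⟩ }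
  rw [Nat.card_congr e, Nat.card_sigma]
  simp only [hfib]
  rw [← Finset.add_sum_erase _ _ (Finset.mem_univ 0), if_pos rfl,
    Finset.sum_congr rfl fun b hb ↦ if_neg (Finset.ne_of_mem_erase hb), Finset.sum_const,
    Finset.card_erase_of_mem (Finset.mem_univ _), Finset.card_univ, ← Nat.card_eq_fintype_card,
    smul_eq_mul, mul_one]
  have := Nat.card_pos (α := F)
  lia

variable [FiniteDimensional F V]

lemma IsHyperbolicPair.card_isotropic (h : IsHyperbolicPair B v u) (hB : B.IsSymm)
    (h2 : (2 : F) ≠ 0) :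
    Nat.card {x : V // B x x = 0} + Nat.card (hyperbolicCompl B v u) =
      Nat.card F * Nat.card (hyperbolicCompl B v u) +
        Nat.card F * Nat.card {y : hyperbolicCompl B v u // B y y = 0} := by
  have : Finite V := Module.finite_of_finite F
  have := Fintype.ofFinite (hyperbolicCompl B v u)
  classical
  let e : {x : V // B x x = 0} ≃ Σ y : hyperbolicCompl B v u,
      {z : F × F // 2 * (z.1 * z.2) = -B y y} :=
    (((h.splitting hB).symm.toEquiv.subtypeEquiv (p := fun z ↦ 2 * (z.1.1 * z.1.2) = -B z.2 z.2)
      fun z ↦ by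
        rw [LinearEquiv.coe_toEquiv, h.apply_splitting_symm, ← add_eq_zero_iff_eq_neg]
        ring_nf).symm).trans
      { toFun z := ⟨z.1.2, z.1.1, z.2⟩
        invFun z := ⟨(z.2.1, z.1), z.2.2⟩ }
  have hcard : Nat.card (hyperbolicCompl B v u) = ∑ y : hyperbolicCompl B v u, 1 := by simp
  rw [Nat.card_congr e, Nat.card_sigma, hcard, ← Finset.sum_add_distrib,
    Finset.sum_congr rfl fun y _ ↦ card_two_mul_mul_eq h2 _, Finset.sum_add_distrib]
  simp [← Finset.sum_filter, Fintype.card_subtype, mul_comm]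

lemma IsHyperbolicPair.hasHyperbolicCount (h : IsHyperbolicPair B v u) (hB : B.IsSymm)
    (h2 : (2 : F) ≠ 0) {k : ℕ} (hV : finrank F V = 2 * (k + 1))
    (hcount : HasHyperbolicCount B (k + 1)) :
    HasHyperbolicCount (B.restrict (hyperbolicCompl B v u)) k := by
  have hU : finrank F (hyperbolicCompl B v u) = 2 * k := by
    have := h.finrank_eq hB
    lia
  have hiso := h.card_isotropic hB h2
  rw [Module.natCard_eq_pow_finrank (K := F) (V := hyperbolicCompl B v u), hU] at hiso
  have hq : Nat.card F ≠ 0 := Nat.card_pos.ne'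
  unfold HasHyperbolicCount at hcount ⊢
  change _ * Nat.card {y : hyperbolicCompl B v u // B y y = 0} + _ = _
  set N := Nat.card {y : hyperbolicCompl B v u // B y y = 0}
  refine mul_left_cancel₀ hq ?_
  zify at *
  linear_combination hcount - Nat.card F * hiso

lemma card_subtype_and_ne {α : Type*} [Finite α] {p : α → Prop} {a : α} (ha : p a) :
    Nat.card {x // p x ∧ x ≠ a} = Nat.card {x // p x} - 1 :=
  Set.ncard_sdiff_singleton_of_mem (s := {x | p x}) ha

/-- Both sides count the pairs of a Lagrangian and a nonzero vector of it. -/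
lemma card_isLagrangian_mul (hnd : B.Nondegenerate) {k c : ℕ} (hV : finrank F V = 2 * k)
    (hc : ∀ v ≠ 0, B v v = 0 → Nat.card {W : Submodule F V // IsLagrangian B W ∧ v ∈ W} = c) :
    Nat.card {W : Submodule F V // IsLagrangian B W} * (Nat.card F ^ k - 1) =
      (Nat.card {x : V // B x x = 0} - 1) * c := by
  have : Finite V := Module.finite_of_finite F
  have : Finite (Submodule F V) := Finite.of_injective _ SetLike.coe_injective
  have := Fintype.ofFinite {W : Submodule F V // IsLagrangian B W}
  have := Fintype.ofFinite {v : V // B v v = 0 ∧ v ≠ 0}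
  let e : (Σ W : {W : Submodule F V // IsLagrangian B W}, {v : V // v ∈ W.1 ∧ v ≠ 0}) ≃
      Σ v : {v : V // B v v = 0 ∧ v ≠ 0}, {W : Submodule F V // IsLagrangian B W ∧ v.1 ∈ W} :=
    { toFun z := ⟨⟨z.2, z.1.2.mem_iff.mp z.2.2.1 _ z.2.2.1, z.2.2.2⟩, z.1, z.1.2, z.2.2.1⟩
      invFun z := ⟨⟨z.2, z.2.2.1⟩, z.1, z.2.2.2, z.1.2.2⟩ }
  have hW (W : {W : Submodule F V // IsLagrangian B W}) :
      Nat.card {v : V // v ∈ W.1 ∧ v ≠ 0} = Nat.card F ^ k - 1 := by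
    have := W.2.two_mul_finrank hnd
    rw [card_subtype_and_ne W.1.zero_mem, Module.natCard_eq_pow_finrank (K := F) (V := W.1)]
    congr 2
    lia
  have hv (v : {v : V // B v v = 0 ∧ v ≠ 0}) :
      Nat.card {W : Submodule F V // IsLagrangian B W ∧ v.1 ∈ W} = c := hc v v.2.2 v.2.1
  have := Nat.card_congr e
  simp only [Nat.card_sigma, hW, hv, Finset.sum_const, Finset.card_univ, smul_eq_mul,
    ← Nat.card_eq_fintype_card] at this
  rwa [card_subtype_and_ne (p := fun v ↦ B v v = 0) (map_zero _)] at this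

lemma HasHyperbolicCount.card_sub_one {k : ℕ} (h : HasHyperbolicCount B (k + 1)) :
    Nat.card {x : V // B x x = 0} - 1 = (Nat.card F ^ k + 1) * (Nat.card F ^ (k + 1) - 1) := by
  have : Finite V := Module.finite_of_finite F
  have : Nonempty {x : V // B x x = 0} := ⟨0, map_zero _⟩
  have hq : 0 < Nat.card F := Nat.card_pos
  have hqk : 1 ≤ Nat.card F ^ (k + 1) := Nat.one_le_pow _ _ hq
  have hiso : 1 ≤ Nat.card {x : V // B x x = 0} := Nat.card_pos
  refine Nat.eq_of_mul_eq_mul_left hq ?_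
  unfold HasHyperbolicCount at h
  zify [hqk, hiso] at h ⊢
  linear_combination h

lemma exists_submodule_card_isLagrangian_mem (h2 : (2 : F) ≠ 0) (hB : B.IsSymm)
    (hnd : B.Nondegenerate) {k : ℕ} (hV : finrank F V = 2 * (k + 1))
    (hcount : HasHyperbolicCount B (k + 1)) (hv0 : v ≠ 0) (hv : B v v = 0) :
    ∃ U : Submodule F V, (B.restrict U).Nondegenerate ∧ finrank F U = 2 * k ∧
      HasHyperbolicCount (B.restrict U) k ∧
      Nat.card {W : Submodule F V // IsLagrangian B W ∧ v ∈ W} =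
        Nat.card {L : Submodule F U // IsLagrangian (B.restrict U) L} := by
  obtain ⟨u, h⟩ := exists_isHyperbolicPair h2 hB hnd hv0 hv
  refine ⟨hyperbolicCompl B v u, h.nondegenerate_restrict_hyperbolicCompl hB hnd, ?_,
    h.hasHyperbolicCount hB h2 hV hcount, Nat.card_congr (h.lagrangianEquiv hB)⟩
  have := h.finrank_eq hB
  lia

theorem card_isLagrangian (h2 : (2 : F) ≠ 0) (hB : B.IsSymm) (hnd : B.Nondegenerate) {k : ℕ}
    (hV : finrank F V = 2 * k) (hcount : HasHyperbolicCount B k) :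
    Nat.card {W : Submodule F V // IsLagrangian B W} =
      ∏ i ∈ Finset.range k, (Nat.card F ^ i + 1) := by
  induction k generalizing V with
  | zero =>
    have : Subsingleton V := finrank_zero_iff.mp hV
    rw [Finset.prod_range_zero, Nat.card_eq_one_iff_unique]
    exact ⟨inferInstance, ⟨⊥, Subsingleton.elim _ _⟩⟩
  | succ k ih =>
    have hmem (v : V) (hv0 : v ≠ 0) (hv : B v v = 0) :
        Nat.card {W : Submodule F V // IsLagrangian B W ∧ v ∈ W} =
          ∏ i ∈ Finset.range k, (Nat.card F ^ i + 1) := by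
      obtain ⟨U, hU, hdim, hcountU, hcard⟩ :=
        exists_submodule_card_isLagrangian_mem h2 hB hnd hV hcount hv0 hv
      rw [hcard, ih (hB.restrict U) hU hdim hcountU]
    have hqk : 1 < Nat.card F ^ (k + 1) := Nat.one_lt_pow k.succ_ne_zero Finite.one_lt_card
    refine Nat.eq_of_mul_eq_mul_right (Nat.sub_pos_of_lt hqk) ?_
    rw [card_isLagrangian_mul hnd hV hmem, hcount.card_sub_one, Finset.prod_range_succ]
    ring

theorem card_isLagrangian_mem (h2 : (2 : F) ≠ 0) (hB : B.IsSymm) (hnd : B.Nondegenerate) {k : ℕ}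
    (hV : finrank F V = 2 * (k + 1)) (hcount : HasHyperbolicCount B (k + 1)) (hv0 : v ≠ 0)
    (hv : B v v = 0) :
    Nat.card {W : Submodule F V // IsLagrangian B W ∧ v ∈ W} =
      ∏ i ∈ Finset.range k, (Nat.card F ^ i + 1) := by
  obtain ⟨U, hU, hdim, hcountU, hcard⟩ :=
    exists_submodule_card_isLagrangian_mem h2 hB hnd hV hcount hv0 hv
  rw [hcard, card_isLagrangian h2 (hB.restrict U) hU hdim hcountU]

end Lagrangians

section GaussSums

lemma addChar_sum {A R ι : Type*} [AddCommMonoid A] [CommMonoid R] (ψ : AddChar A R)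
    (s : Finset ι) (f : ι → A) : ψ (∑ i ∈ s, f i) = ∏ i ∈ s, ψ (f i) :=
  map_prod ψ.toMonoidHom (fun i ↦ Multiplicative.ofAdd (f i)) s

lemma exists_congr_diagonal {F ι : Type*} [Field F] [Fintype ι] [DecidableEq ι] (h2 : (2 : F) ≠ 0)
    {S : Matrix ι ι F} (hS : S.IsSymm) :
    ∃ (P : Matrix ι ι F) (w : ι → F), IsUnit P ∧ Pᵀ * S * P = Matrix.diagonal w := by
  have : Invertible (2 : F) := invertibleOfNonzero h2
  obtain ⟨b, hb⟩ := LinearMap.BilinForm.exists_orthogonal_basis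
    (B := Matrix.toBilin' S) ⟨(Matrix.isSymm_toBilin'_iff_isSymm.mpr hS).eq⟩
  let e : Fin (Module.finrank F (ι → F)) ≃ ι := Fintype.equivOfCardEq (by simp)
  let P := (Pi.basisFun F ι).toMatrix (b.reindex e)
  refine ⟨P, fun i ↦ Matrix.toBilin' S (b (e.symm i)) (b (e.symm i)),
    IsUnit.of_mul_eq_one _ (Module.Basis.toMatrix_mul_toMatrix_flip _ _), ?_⟩
  ext i j
  have hP : (Pᵀ * S * P) i j = Matrix.toBilin' S (b (e.symm i)) (b (e.symm j)) := by
    rw [Matrix.toBilin'_apply', Matrix.mul_assoc]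
    simp only [← b.reindex_apply e]
    rfl
  rw [hP, Matrix.diagonal_apply]
  split_ifs with h
  · rw [h]
  · exact hb (e.symm.injective.ne h)

variable {F : Type*} [Field F] [Fintype F] [DecidableEq F]
  {R : Type*} [CommRing R] [IsDomain R] [CharZero R]

variable (F R) in
/-- The quadratic character of a finite field with values in an arbitrary ring. -/
def quadraticMulChar : MulChar F R :=
  (quadraticChar F).ringHomComp (Int.castRingHom R)

lemma quadraticMulChar_sq {a : F} (ha : a ≠ 0) : quadraticMulChar F R a ^ 2 = 1 := by
  simpa [quadraticMulChar] using congrArg (Int.cast (R := R)) (quadraticChar_sq_one ha)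

lemma quadraticMulChar_mul_self {a : F} (ha : a ≠ 0) : quadraticMulChar F R (a * a) = 1 := by
  rw [map_mul, ← sq, quadraticMulChar_sq ha]

lemma gaussSum_quadraticMulChar_sq (hF : ringChar F ≠ 2) {ψ : AddChar F R} (hψ : ψ.IsPrimitive) :
    gaussSum (quadraticMulChar F R) ψ ^ 2 = quadraticMulChar F R (-1) * Fintype.card F :=
  gaussSum_sq ((MulChar.ringHomComp_ne_one_iff (RingHom.injective_int _)).mpr
    (quadraticChar_ne_one hF)) ((quadraticChar_isQuadratic F).comp _) hψ

lemma sum_addChar_mul_sq (hF : ringChar F ≠ 2) {ψ : AddChar F R} (hψ : ψ.IsPrimitive) {c : F}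
    (hc : c ≠ 0) :
    ∑ t, ψ (c * t ^ 2) = quadraticMulChar F R c * gaussSum (quadraticMulChar F R) ψ := by
  have hfib (s : F) : ∑ t with t ^ 2 = s, ψ (c * t ^ 2) =
      (quadraticMulChar F R s + 1) * ψ (c * s) := by
    have hcard : (Finset.card {t : F | t ^ 2 = s} : R) = quadraticMulChar F R s + 1 := by
      have := congrArg (Int.cast (R := R)) (quadraticChar_card_sqrts hF s)
      simpa [quadraticMulChar, Set.toFinset_ofPred] using this
    rw [Finset.sum_congr rfl fun t ht ↦ by rw [(Finset.mem_filter.mp ht).2], Finset.sum_const,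
      nsmul_eq_mul, hcard]
  have hψc : ∑ s, ψ (c * s) = 0 := by
    simpa [hc, mul_comm] using AddChar.sum_mulShift c hψ
  have hshift : quadraticMulChar F R c * ∑ s, quadraticMulChar F R s * ψ (c * s) =
      gaussSum (quadraticMulChar F R) ψ :=
    gaussSum_mulShift (quadraticMulChar F R) ψ (Units.mk0 c hc)
  rw [← Finset.sum_fiberwise Finset.univ (fun t : F ↦ t ^ 2),
    Finset.sum_congr rfl fun s _ ↦ hfib s, ← hshift, ← mul_assoc, ← sq, quadraticMulChar_sq hc]
  simp only [add_mul, one_mul, Finset.sum_add_distrib, hψc, add_zero]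

variable {ι : Type*} [Fintype ι] [DecidableEq ι]

lemma sum_addChar_mul_sum_mul_sq (hF : ringChar F ≠ 2) {ψ : AddChar F R} (hψ : ψ.IsPrimitive)
    {k : ℕ} (hι : Fintype.card ι = 2 * k) {w : ι → F} (hw : ∀ i, w i ≠ 0) {a : F} (ha : a ≠ 0) :
    ∑ x : ι → F, ψ (a * ∑ i, w i * x i ^ 2) =
      quadraticMulChar F R ((-1) ^ k * ∏ i, w i) * (Fintype.card F : R) ^ k := by
  have hψx (x : ι → F) : ψ (a * ∑ i, w i * x i ^ 2) = ∏ i, ψ ((a * w i) * x i ^ 2) := by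
    simp only [Finset.mul_sum, addChar_sum, mul_assoc]
  simp only [hψx]
  rw [← Fintype.piFinset_univ,
    Finset.sum_prod_piFinset Finset.univ (fun i t ↦ ψ ((a * w i) * t ^ 2)),
    Finset.prod_congr rfl fun i _ ↦ sum_addChar_mul_sq hF hψ (mul_ne_zero ha (hw i)),
    Finset.prod_mul_distrib, ← map_prod, Finset.prod_mul_distrib, Finset.prod_const,
    Finset.prod_const, Finset.card_univ, hι, pow_mul, pow_mul, gaussSum_quadraticMulChar_sq hF hψ,
    mul_pow, map_mul, map_mul, map_pow, map_pow, map_pow, quadraticMulChar_sq ha, one_pow]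
  ring

lemma sum_addChar_quadForm (hF : ringChar F ≠ 2) {ψ : AddChar F R} (hψ : ψ.IsPrimitive) {k : ℕ}
    (hι : Fintype.card ι = 2 * k) {S : Matrix ι ι F} (hS : S.IsSymm) (hdet : S.det ≠ 0) {a : F}
    (ha : a ≠ 0) :
    ∑ x : ι → F, ψ (a * (x ⬝ᵥ S *ᵥ x)) =
      quadraticMulChar F R ((-1) ^ k * S.det) * (Fintype.card F : R) ^ k := by
  obtain ⟨P, w, hP, hPS⟩ := exists_congr_diagonal (Ring.two_ne_zero hF) hS
  have hP0 : P.det ≠ 0 := ((Matrix.isUnit_iff_isUnit_det P).mp hP).ne_zero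
  have hw : ∏ i, w i = S.det * (P.det * P.det) := by
    rw [← Matrix.det_diagonal, ← hPS, Matrix.det_mul, Matrix.det_mul, Matrix.det_transpose]
    ring
  have hw0 : ∏ i, w i ≠ 0 := hw ▸ mul_ne_zero hdet (mul_ne_zero hP0 hP0)
  have hPx (x : ι → F) : (P *ᵥ x) ⬝ᵥ S *ᵥ (P *ᵥ x) = ∑ i, w i * x i ^ 2 := by
    rw [← Matrix.vecMul_transpose P x, ← Matrix.dotProduct_mulVec, Matrix.vecMul_transpose,
      Matrix.mulVec_mulVec, Matrix.mulVec_mulVec, hPS]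
    simp only [dotProduct, Matrix.mulVec_diagonal]
    exact Finset.sum_congr rfl fun i _ ↦ by ring
  have hbij : Function.Bijective P.mulVec :=
    ⟨Matrix.mulVec_injective_of_isUnit hP, Matrix.mulVec_surjective_iff_isUnit.mpr hP⟩
  rw [← hbij.sum_comp]
  simp only [hPx]
  rw [sum_addChar_mul_sum_mul_sq hF hψ hι (fun i ↦ Finset.prod_ne_zero_iff.mp hw0 i (by simp)) ha,
    hw, ← mul_assoc, map_mul _ (_ * _) (_ * _), quadraticMulChar_mul_self hP0, mul_one]

end GaussSums

theorem hasHyperbolicCount_toBilin' {F ι : Type*} [Field F] [Finite F] [Fintype ι] [DecidableEq ι]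
    (hF : ringChar F ≠ 2) {k : ℕ} (hι : Fintype.card ι = 2 * k) {S : Matrix ι ι F} (hS : S.IsSymm)
    (hdet : S.det ≠ 0) (hsq : IsSquare ((-1) ^ k * S.det)) :
    HasHyperbolicCount (Matrix.toBilin' S) k := by
  have := Fintype.ofFinite F
  classical
  obtain ⟨ψ, hψ⟩ : ∃ ψ : AddChar F ℂ, ψ.IsPrimitive :=
    ⟨_, AddChar.FiniteField.primitiveChar_to_Complex_isPrimitive F⟩
  have hχ : quadraticMulChar F ℂ ((-1) ^ k * S.det) = 1 := by
    obtain ⟨b, hb⟩ := hsq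
    have hb0 : b ≠ 0 := by
      rintro rfl
      simp [hdet] at hb
    rw [hb, quadraticMulChar_mul_self hb0]
  have hcount : (Nat.card {x : ι → F // x ⬝ᵥ S *ᵥ x = 0} * Fintype.card F : ℂ) =
      ∑ x : ι → F, ∑ a, ψ (a * (x ⬝ᵥ S *ᵥ x)) := by
    simp only [AddChar.sum_mulShift _ hψ]
    simp [← Finset.sum_filter, Fintype.card_subtype]
  rw [Finset.sum_comm, ← Finset.add_sum_erase _ _ (Finset.mem_univ 0),
    Finset.sum_congr rfl fun a ha ↦ sum_addChar_quadForm hF hψ hι hS hdet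
      (Finset.ne_of_mem_erase ha), hχ, Finset.sum_const,
    Finset.card_erase_of_mem (Finset.mem_univ _), Finset.card_univ, nsmul_eq_mul,
    Nat.cast_pred Fintype.card_pos] at hcount
  simp only [zero_mul, AddChar.map_zero_eq_one, Finset.sum_const, Finset.card_univ,
    Fintype.card_fun, hι, nsmul_eq_mul, Nat.cast_pow] at hcount
  rw [HasHyperbolicCount, ← Nat.cast_inj (R := ℂ)]
  simp only [Matrix.toBilin'_apply', Nat.card_eq_fintype_card (α := F)]
  push_cast
  linear_combination hcount
section Similitudes

variable {ι : Type*} [Fintype ι]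

/-- The integral similitudes of factor `c` from the lattice with Gram matrix `T` to the one with
Gram matrix `S`. -/
def similitudes (c : ℤ) (S T : Matrix ι ι ℤ) : Set (Matrix ι ι ℤ) :=
  {B | Bᵀ * S * B = c • T}

lemma dotProduct_mulVec_of_mem_similitudes {c : ℤ} {S T B : Matrix ι ι ℤ}
    (hB : B ∈ similitudes c S T) (x y : ι → ℤ) :
    (B *ᵥ x) ⬝ᵥ S *ᵥ (B *ᵥ y) = c * (x ⬝ᵥ T *ᵥ y) := by
  rw [mulVec_dotProduct_mulVec_mulVec, show Bᵀ * S * B = c • T from hB, Matrix.smul_mulVec,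
    dotProduct_smul, smul_eq_mul]

lemma mul_mem_similitudes {c : ℤ} {S T B : Matrix ι ι ℤ} (hB : B ∈ similitudes c S T)
    (U : Matrix ι ι ℤ) :
    B * U ∈ similitudes c S (Uᵀ * T * U) := by
  change _ = _
  rw [Matrix.transpose_mul, ← Matrix.smul_mul, ← Matrix.mul_smul,
    ← show Bᵀ * S * B = c • T from hB]
  simp only [Matrix.mul_assoc]

variable [DecidableEq ι]

section CommRing

variable {R : Type*} [CommRing R] [IsDomain R] {B C : Matrix ι ι R} {c : R}

lemma det_ne_zero_of_mul_eq_smul_one (hc : c ≠ 0) (h : B * C = c • 1) : C.det ≠ 0 := fun h0 ↦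
  pow_ne_zero (Fintype.card ι) hc <| by simpa [h0] using (congrArg Matrix.det h).symm

lemma mul_eq_smul_one_comm (hc : c ≠ 0) (h : B * C = c • 1) : C * B = c • 1 := by
  have hC : IsRegular C := Matrix.isRegular_of_isLeftRegular_det
    (IsRegular.of_ne_zero (det_ne_zero_of_mul_eq_smul_one hc h)).left
  refine hC.right ?_
  simp only [Matrix.mul_assoc, h, Matrix.mul_smul, Matrix.smul_mul, mul_one, one_mul]

end CommRing

variable {c : ℤ} {S T B : Matrix ι ι ℤ}

/-- The adjoint of `B : (ℤ^ι, T) → (ℤ^ι, S)` with respect to the two forms. -/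
def adjointMatrix (S T B : Matrix ι ι ℤ) : Matrix ι ι ℤ :=
  T⁻¹ * Bᵀ * S

lemma adjointMatrix_mul (hT : IsUnit T.det) (hB : B ∈ similitudes c S T) :
    adjointMatrix S T B * B = c • 1 := by
  rw [adjointMatrix, Matrix.mul_assoc, Matrix.mul_assoc, ← Matrix.mul_assoc Bᵀ,
    show Bᵀ * S * B = c • T from hB, Matrix.mul_smul, Matrix.nonsing_inv_mul _ hT]

lemma mul_adjointMatrix (hc : c ≠ 0) (hT : IsUnit T.det) (hB : B ∈ similitudes c S T) :
    B * adjointMatrix S T B = c • 1 :=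
  mul_eq_smul_one_comm hc (adjointMatrix_mul hT hB)

lemma det_ne_zero_of_mem_similitudes (hc : c ≠ 0) (hT : IsUnit T.det)
    (hB : B ∈ similitudes c S T) : B.det ≠ 0 :=
  det_ne_zero_of_mul_eq_smul_one hc (adjointMatrix_mul hT hB)

lemma isRegular_of_mem_similitudes (hc : c ≠ 0) (hT : IsUnit T.det)
    (hB : B ∈ similitudes c S T) : IsRegular B :=
  Matrix.isRegular_of_isLeftRegular_det
    (IsRegular.of_ne_zero (det_ne_zero_of_mem_similitudes hc hT hB)).left

lemma mulVec_injective_of_mem_similitudes (hc : c ≠ 0) (hT : IsUnit T.det)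
    (hB : B ∈ similitudes c S T) : Function.Injective B.mulVec :=
  Matrix.mulVec_injective_of_det_ne_zero (det_ne_zero_of_mem_similitudes hc hT hB)

lemma adjointMatrix_adjointMatrix (hS : S.IsSymm) (hT : T.IsSymm) (hS' : IsUnit S.det)
    (hT' : IsUnit T.det) : adjointMatrix T S (adjointMatrix S T B) = B := by
  simp only [adjointMatrix, Matrix.transpose_mul, Matrix.transpose_transpose, hS.eq,
    Matrix.transpose_nonsing_inv, hT.eq]
  rw [← Matrix.mul_assoc S, Matrix.mul_assoc, Matrix.nonsing_inv_mul_cancel_right _ _ hT',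
    Matrix.nonsing_inv_mul_cancel_left _ _ hS']

lemma adjointMatrix_mem_similitudes (hc : c ≠ 0) (hS : S.IsSymm) (hT : T.IsSymm)
    (hT' : IsUnit T.det) (hB : B ∈ similitudes c S T) :
    adjointMatrix S T B ∈ similitudes c T S := by
  have htr : (adjointMatrix S T B)ᵀ * T = S * B := by
    simp only [adjointMatrix, Matrix.transpose_mul, Matrix.transpose_transpose, hS.eq,
      Matrix.transpose_nonsing_inv, hT.eq]
    rw [← Matrix.mul_assoc, Matrix.nonsing_inv_mul_cancel_right _ _ hT']
  change _ * T * _ = _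
  rw [htr, Matrix.mul_assoc, mul_adjointMatrix hc hT' hB, Matrix.mul_smul, mul_one]

theorem card_similitudes_comm (hc : c ≠ 0) (hS : S.IsSymm) (hT : T.IsSymm) (hS' : IsUnit S.det)
    (hT' : IsUnit T.det) : Nat.card (similitudes c S T) = Nat.card (similitudes c T S) :=
  Nat.card_congr
    { toFun B := ⟨_, adjointMatrix_mem_similitudes hc hS hT hT' B.2⟩
      invFun B := ⟨_, adjointMatrix_mem_similitudes hc hT hS hS' B.2⟩
      left_inv _ := Subtype.ext (adjointMatrix_adjointMatrix hS hT hS' hT')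
      right_inv _ := Subtype.ext (adjointMatrix_adjointMatrix hT hS hT' hS') }

end Similitudes

section ScaledSelfDual

variable {ι : Type*} [Fintype ι]

/-- The sublattice `L` is equal to its dual with respect to the form `c⁻¹ xᵀSy`. -/
def IsScaledSelfDual (S : Matrix ι ι ℤ) (c : ℤ) (L : Submodule ℤ (ι → ℤ)) : Prop :=
  ∀ y, y ∈ L ↔ ∀ x ∈ L, c ∣ x ⬝ᵥ S *ᵥ y

variable {c : ℤ} {S T B : Matrix ι ι ℤ} {L : Submodule ℤ (ι → ℤ)}

lemma IsScaledSelfDual.smul_mem (hL : IsScaledSelfDual S c L) (x : ι → ℤ) : c • x ∈ L :=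
  (hL _).mpr fun y _ ↦ by
    rw [Matrix.mulVec_smul, dotProduct_smul]
    exact Dvd.intro _ rfl

lemma exists_range_mulVecLin_eq (hc : c ≠ 0) (hL : ∀ x, c • x ∈ L) :
    ∃ B : Matrix ι ι ℤ, LinearMap.range B.mulVecLin = L := by
  classical
  have hrank : Module.finrank ℤ L = Fintype.card ι := by
    refine le_antisymm (by simpa using L.finrank_le) ?_
    let f : (ι → ℤ) →ₗ[ℤ] L := (c • LinearMap.id).codRestrict L hL
    have hf : Function.Injective f := fun x y hxy ↦
      smul_right_injective _ hc (congrArg Subtype.val hxy)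
    simpa using LinearMap.finrank_le_finrank_of_injective hf
  let b := (Module.finBasisOfFinrankEq ℤ L hrank).reindex (Fintype.equivFin ι).symm
  refine ⟨LinearMap.toMatrix' (L.subtype ∘ₗ b.equivFun.symm.toLinearMap), ?_⟩
  rw [← Matrix.toLin'_apply', Matrix.toLin'_toMatrix', LinearMap.range_comp, LinearEquiv.range,
    Submodule.map_subtype_top]

variable [DecidableEq ι]

lemma isScaledSelfDual_range (hc : c ≠ 0) (hT : IsUnit T.det) (hB : B ∈ similitudes c S T) :
    IsScaledSelfDual S c (LinearMap.range B.mulVecLin) := by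
  intro y
  constructor
  · rintro ⟨z, rfl⟩ - ⟨w, rfl⟩
    exact Dvd.intro _ (dotProduct_mulVec_of_mem_similitudes hB w z).symm
  · intro h
    have hdvd (i : ι) : c ∣ (Bᵀ *ᵥ S *ᵥ y) i := by
      have := h _ ⟨Pi.single i 1, rfl⟩
      rwa [Matrix.mulVecLin_apply, Matrix.mulVec_single_one] at this
    choose z hz using hdvd
    refine ⟨T⁻¹ *ᵥ z, smul_right_injective _ hc ?_⟩
    calc c • B *ᵥ T⁻¹ *ᵥ z = B *ᵥ T⁻¹ *ᵥ Bᵀ *ᵥ S *ᵥ y := by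
          rw [show Bᵀ *ᵥ S *ᵥ y = c • z from funext hz, Matrix.mulVec_smul, Matrix.mulVec_smul]
      _ = (B * adjointMatrix S T B) *ᵥ y := by
          simp only [adjointMatrix, Matrix.mulVec_mulVec, Matrix.mul_assoc]
      _ = c • y := by rw [mul_adjointMatrix hc hT hB, Matrix.smul_mulVec, Matrix.one_mulVec]

/-- `T` is the Gram matrix of the form `c⁻¹ xᵀSy` in a basis of `L`. -/
lemma IsScaledSelfDual.exists_mem_similitudes (hc : c ≠ 0) (hS : IsUnit S.det)
    (hL : IsScaledSelfDual S c L) :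
    ∃ T B : Matrix ι ι ℤ, IsUnit T.det ∧ B ∈ similitudes c S T ∧
      LinearMap.range B.mulVecLin = L := by
  obtain ⟨B, hBL⟩ := exists_range_mulVecLin_eq hc hL.smul_mem
  have hmem (z : ι → ℤ) : B *ᵥ z ∈ L := hBL ▸ ⟨z, rfl⟩
  obtain ⟨C, hBC⟩ : ∃ C, c • 1 = B * C := exists_eq_mul_of_range_le <| by
    rintro - ⟨x, rfl⟩
    simpa [hBL, Matrix.smul_mulVec] using hL.smul_mem x
  have hCB : C * B = c • 1 := mul_eq_smul_one_comm hc hBC.symm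
  have hdvd (i j : ι) : c ∣ (Bᵀ * S * B) i j := by
    have := (hL _).mp (hmem (Pi.single j 1)) _ (hmem (Pi.single i 1))
    rwa [mulVec_dotProduct_mulVec_mulVec, Matrix.mulVec_single_one, single_one_dotProduct] at this
  choose T hT using hdvd
  have hBT : Bᵀ * S * B = c • Matrix.of T := by
    ext i j
    simp [hT]
  -- the columns of `S⁻¹Cᵀ` span the dual of `L`, which is `L` again
  obtain ⟨E, hE⟩ : ∃ E, S⁻¹ * Cᵀ = B * E := exists_eq_mul_of_range_le <| by
    rintro - ⟨x, rfl⟩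
    rw [hBL, Matrix.mulVecLin_apply, hL]
    rw [← hBL]
    rintro - ⟨z, rfl⟩
    refine ⟨z ⬝ᵥ x, ?_⟩
    rw [Matrix.mulVecLin_apply, Matrix.mulVec_mulVec, Matrix.mul_nonsing_inv_cancel_left _ _ hS,
      Matrix.mulVec_transpose, dotProduct_comm, ← Matrix.dotProduct_mulVec, Matrix.mulVec_mulVec,
      hCB, Matrix.smul_mulVec, Matrix.one_mulVec, dotProduct_smul, smul_eq_mul, dotProduct_comm x]
  refine ⟨Matrix.of T, B, ?_, hBT, hBL⟩
  have hTE : Matrix.of T * E = 1 := smul_right_injective _ hc <| by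
    dsimp only
    rw [← Matrix.smul_mul, ← hBT, Matrix.mul_assoc, ← hE, Matrix.mul_assoc,
      Matrix.mul_nonsing_inv_cancel_left _ _ hS, ← Matrix.transpose_mul, hCB,
      Matrix.transpose_smul, Matrix.transpose_one]
  exact IsUnit.of_mul_eq_one _ (by rw [← Matrix.det_mul, hTE, Matrix.det_one])

lemma exists_eq_mul_of_range_eq {T' B' : Matrix ι ι ℤ} (hc : c ≠ 0) (hT : IsUnit T.det)
    (hB : B ∈ similitudes c S T) (hB' : B' ∈ similitudes c S T')
    (h : LinearMap.range B.mulVecLin = LinearMap.range B'.mulVecLin) :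
    ∃ U : Matrix ι ι ℤ, IsUnit U.det ∧ B' = B * U ∧ T' = Uᵀ * T * U := by
  obtain ⟨U, hU⟩ := exists_eq_mul_of_range_le h.ge
  obtain ⟨V, hV⟩ := exists_eq_mul_of_range_le h.le
  have hUV : U * V = 1 := by
    refine (isRegular_of_mem_similitudes hc hT hB).left ?_
    simp only [← Matrix.mul_assoc, ← hU, ← hV, mul_one]
  refine ⟨U, IsUnit.of_mul_eq_one _ (by rw [← Matrix.det_mul, hUV, Matrix.det_one]), hU,
    smul_right_injective _ hc ?_⟩
  dsimp only
  rw [← show B'ᵀ * S * B' = c • T' from hB', hU, Matrix.transpose_mul, ← Matrix.smul_mul,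
    ← Matrix.mul_smul, ← show Bᵀ * S * B = c • T from hB]
  simp only [Matrix.mul_assoc]

lemma range_mul_mulVecLin {U : Matrix ι ι ℤ} (hU : IsUnit U.det) :
    LinearMap.range (B * U).mulVecLin = LinearMap.range B.mulVecLin := by
  rw [Matrix.mulVecLin_mul, LinearMap.range_comp_of_range_eq_top]
  exact LinearMap.range_eq_top.mpr (Matrix.mulVec_surjective_iff_isUnit.mpr
    ((Matrix.isUnit_iff_isUnit_det _).mpr hU))

end ScaledSelfDual

section EvenUnimodular

variable {m : ℕ} {c : ℤ} {S T B : Matrix (Fin m) (Fin m) ℤ} {L : Submodule ℤ (Fin m → ℤ)}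

lemma isUnit_det (hS : IsPosDefEvenUnimodular S) : IsUnit S.det :=
  hS.2.2.1 ▸ isUnit_one

lemma isSymm_of_mem_similitudes (hc : c ≠ 0) (hS : S.IsSymm) (hB : B ∈ similitudes c S T) :
    T.IsSymm := by
  refine smul_right_injective _ hc ?_
  dsimp only
  rw [← Matrix.transpose_smul, ← show Bᵀ * S * B = c • T from hB, Matrix.transpose_mul,
    Matrix.transpose_mul, hS.eq, Matrix.transpose_transpose, Matrix.mul_assoc]

lemma posDef_of_mem_similitudes (hc : 0 < c) (hS : (S.map ((↑) : ℤ → ℝ)).PosDef)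
    (hT : IsUnit T.det) (hB : B ∈ similitudes c S T) : (T.map ((↑) : ℤ → ℝ)).PosDef := by
  have hBr : (B.map ((↑) : ℤ → ℝ))ᵀ * S.map ((↑) : ℤ → ℝ) * B.map ((↑) : ℤ → ℝ) =
      (c : ℝ) • T.map ((↑) : ℤ → ℝ) := by
    calc _ = (Bᵀ * S * B).map (Int.castRingHom ℝ) := by rw [Matrix.map_mul, Matrix.map_mul]; rfl
      _ = (c • T).map (Int.castRingHom ℝ) := by rw [show Bᵀ * S * B = c • T from hB]
      _ = _ := by
        ext i j
        simp only [Matrix.map_apply, Matrix.smul_apply, smul_eq_mul, eq_intCast, Int.cast_mul]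
  have hinj : Function.Injective (B.map ((↑) : ℤ → ℝ)).mulVec := by
    refine Matrix.mulVec_injective_of_det_ne_zero ?_
    have : (B.map (Int.castRingHom ℝ)).det = (B.det : ℝ) := ((Int.castRingHom ℝ).map_det B).symm
    exact this ▸ Int.cast_ne_zero.mpr (det_ne_zero_of_mem_similitudes hc.ne' hT hB)
  have hpos := hS.conjTranspose_mul_mul_same hinj
  rw [Matrix.conjTranspose_eq_transpose_of_trivial, hBr] at hpos
  simpa [smul_smul, hc.ne'] using hpos.smul (inv_pos.mpr (Int.cast_pos (R := ℝ).mpr hc))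

lemma det_eq_one_of_posDef (hT : (T.map ((↑) : ℤ → ℝ)).PosDef) (hdet : IsUnit T.det) :
    T.det = 1 := by
  refine (Int.isUnit_iff.mp hdet).resolve_right fun h ↦ ?_
  have hpos : 0 < (T.map (Int.castRingHom ℝ)).det := hT.det_pos
  rw [← RingHom.mapMatrix_apply, ← RingHom.map_det, h] at hpos
  norm_num at hpos

/-- The factor `c` is odd so that `c T[x] = S[Bx]` forces `T[x]` to be even. -/
lemma isPosDefEvenUnimodular_of_mem_similitudes (hc : 0 < c) (hodd : Odd c)
    (hS : IsPosDefEvenUnimodular S) (hT : IsUnit T.det) (hB : B ∈ similitudes c S T) :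
    IsPosDefEvenUnimodular T := by
  have hpos := posDef_of_mem_similitudes hc hS.2.1 hT hB
  refine ⟨isSymm_of_mem_similitudes hc.ne' hS.1 hB, hpos, det_eq_one_of_posDef hpos hT, fun i ↦ ?_⟩
  have heven := even_dotProduct_mulVec_self hS.1 hS.2.2.2 (B *ᵥ Pi.single i 1)
  rw [dotProduct_mulVec_of_mem_similitudes hB, Matrix.mulVec_single_one,
    single_one_dotProduct] at heven
  exact (Int.even_mul.mp heven).resolve_left (Int.not_even_iff_odd.mpr hodd)

lemma autCard_ne_zero (hS : (S.map ((↑) : ℤ → ℝ)).PosDef) : autCard S ≠ 0 := by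
  have : Finite {U : Matrix (Fin m) (Fin m) ℤ // IsUnit U.det ∧ Uᵀ * S * U = S} :=
    ((finite_setOf_transpose_mul_mul_eq hS S).subset fun U hU ↦ hU.2).to_subtype
  have : Nonempty {U : Matrix (Fin m) (Fin m) ℤ // IsUnit U.det ∧ Uᵀ * S * U = S} :=
    ⟨⟨1, by simp, by simp⟩⟩
  exact Nat.card_pos.ne'

lemma card_similitudes_range_eq (hc : c ≠ 0) (hT : IsUnit T.det) (hB : B ∈ similitudes c S T)
    (hBL : LinearMap.range B.mulVecLin = L) :
    Nat.card {A // A ∈ similitudes c S T ∧ LinearMap.range A.mulVecLin = L} = autCard T := by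
  let f (U : {U : Matrix (Fin m) (Fin m) ℤ // IsUnit U.det ∧ Uᵀ * T * U = T}) :
      {A // A ∈ similitudes c S T ∧ LinearMap.range A.mulVecLin = L} :=
    ⟨B * U.1, by simpa only [U.2.2] using mul_mem_similitudes hB U.1,
      (range_mul_mulVecLin U.2.1).trans hBL⟩
  refine (Nat.card_congr (.ofBijective f ⟨fun U V hUV ↦ ?_, ?_⟩)).symm
  · exact Subtype.ext ((isRegular_of_mem_similitudes hc hT hB).left (congrArg Subtype.val hUV))
  · rintro ⟨A, hA, hAL⟩
    obtain ⟨U, hU, rfl, hTU⟩ := exists_eq_mul_of_range_eq hc hT hB hA (hBL.trans hAL.symm)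
    exact ⟨⟨U, hU, hTU.symm⟩, rfl⟩

/-- `R` is a system of representatives of the classes of positive definite even unimodular
matrices. -/
structure IsClassRepresentatives (R : Finset (Matrix (Fin m) (Fin m) ℤ)) : Prop where
  isPosDefEvenUnimodular : ∀ S ∈ R, IsPosDefEvenUnimodular S
  eq_of_matEquiv : ∀ S ∈ R, ∀ T ∈ R, MatEquiv S T → S = T
  exists_matEquiv : ∀ T : Matrix (Fin m) (Fin m) ℤ, IsPosDefEvenUnimodular T → ∃ S ∈ R, MatEquiv S T

variable {R : Finset (Matrix (Fin m) (Fin m) ℤ)}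

lemma IsClassRepresentatives.exists_range_eq (hR : IsClassRepresentatives R) (hc : 0 < c)
    (hodd : Odd c) (hS : IsPosDefEvenUnimodular S) (hL : IsScaledSelfDual S c L) :
    ∃ T ∈ R, ∃ B ∈ similitudes c S T, LinearMap.range B.mulVecLin = L := by
  obtain ⟨T, B, hT, hB, rfl⟩ := hL.exists_mem_similitudes hc.ne' (isUnit_det hS)
  obtain ⟨T', hT', U, hU, rfl⟩ := hR.exists_matEquiv T
    (isPosDefEvenUnimodular_of_mem_similitudes hc hodd hS hT hB)
  refine ⟨T', hT', B * U⁻¹, ?_, range_mul_mulVecLin (Matrix.isUnit_nonsing_inv_det _ hU)⟩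
  convert mul_mem_similitudes hB U⁻¹ using 1
  rw [Matrix.transpose_nonsing_inv, Matrix.mul_assoc, Matrix.mul_nonsing_inv_cancel_right _ _ hU,
    Matrix.nonsing_inv_mul_cancel_left _ _ (by rwa [Matrix.det_transpose])]

/-- A lattice `L` equal to its dual belongs to exactly one class `T ∈ R`, and is the image of
`autCard T` similitudes. -/
lemma IsClassRepresentatives.sum_card_similitudes_range_eq (hR : IsClassRepresentatives R)
    (hc : 0 < c) (hodd : Odd c) (hS : IsPosDefEvenUnimodular S) (hL : IsScaledSelfDual S c L) :
    ∑ T ∈ R, (autCard T : ℂ)⁻¹ *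
      Nat.card {B // B ∈ similitudes c S T ∧ LinearMap.range B.mulVecLin = L} = 1 := by
  obtain ⟨T, hTR, B, hB, hBL⟩ := hR.exists_range_eq hc hodd hS hL
  have hT := hR.isPosDefEvenUnimodular T hTR
  rw [Finset.sum_eq_single_of_mem T hTR fun T' hT' hne ↦ ?_,
    card_similitudes_range_eq hc.ne' (isUnit_det hT) hB hBL,
    inv_mul_cancel₀ (Nat.cast_ne_zero.mpr (autCard_ne_zero hT.2.1))]
  have : IsEmpty {A // A ∈ similitudes c S T' ∧ LinearMap.range A.mulVecLin = L} := by
    refine ⟨fun ⟨A, hA, hAL⟩ ↦ hne ?_⟩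
    obtain ⟨U, hU, -, hT'U⟩ :=
      exists_eq_mul_of_range_eq hc.ne' (isUnit_det hT) hB hA (hBL.trans hAL.symm)
    exact (hR.eq_of_matEquiv T hTR T' hT' ⟨U, hU, hT'U⟩).symm
  simp

lemma IsClassRepresentatives.sum_card_similitudes_mem_range (hR : IsClassRepresentatives R)
    (hc : 0 < c) (hodd : Odd c) (hS : IsPosDefEvenUnimodular S)
    [Finite {L // IsScaledSelfDual S c L}] (y : Fin m → ℤ) :
    ∑ T ∈ R, (autCard T : ℂ)⁻¹ *
      Nat.card {B // B ∈ similitudes c S T ∧ y ∈ LinearMap.range B.mulVecLin} =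
        Nat.card {L // IsScaledSelfDual S c L ∧ y ∈ L} := by
  have : Finite {L // IsScaledSelfDual S c L ∧ y ∈ L} :=
    Finite.of_injective _ (Subtype.impEmbedding _ (IsScaledSelfDual S c) fun _ h ↦ h.1).injective
  have := Fintype.ofFinite {L // IsScaledSelfDual S c L ∧ y ∈ L}
  have hfiber (T) (hT : T ∈ R) :
      Nat.card {B // B ∈ similitudes c S T ∧ y ∈ LinearMap.range B.mulVecLin} =
        ∑ L : {L // IsScaledSelfDual S c L ∧ y ∈ L},
          Nat.card {B // B ∈ similitudes c S T ∧ LinearMap.range B.mulVecLin = L} := by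
    have hTpos := hR.isPosDefEvenUnimodular T hT
    have (L : {L // IsScaledSelfDual S c L ∧ y ∈ L}) :
        Finite {B // B ∈ similitudes c S T ∧ LinearMap.range B.mulVecLin = L} :=
      ((finite_setOf_transpose_mul_mul_eq hS.2.1 (c • T)).subset fun B hB ↦ hB.1).to_subtype
    rw [← Nat.card_sigma]
    exact Nat.card_congr
      { toFun B := ⟨⟨_, isScaledSelfDual_range hc.ne' (isUnit_det hTpos) B.2.1, B.2.2⟩,
          ⟨B.1, B.2.1, rfl⟩⟩
        invFun B := ⟨B.2.1, B.2.2.1, by rw [B.2.2.2]; exact B.1.2.2⟩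
        left_inv _ := rfl
        right_inv := by
          rintro ⟨⟨L, _⟩, ⟨B, _, (rfl : _ = L)⟩⟩
          rfl }
  calc _ = ∑ T ∈ R, ∑ L : {L // IsScaledSelfDual S c L ∧ y ∈ L}, (autCard T : ℂ)⁻¹ *
          Nat.card {B // B ∈ similitudes c S T ∧ LinearMap.range B.mulVecLin = L} :=
        Finset.sum_congr rfl fun T hT ↦ by rw [hfiber T hT, Nat.cast_sum, Finset.mul_sum]
    _ = ∑ L : {L // IsScaledSelfDual S c L ∧ y ∈ L}, 1 := by
        rw [Finset.sum_comm]
        exact Finset.sum_congr rfl fun L _ ↦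
          hR.sum_card_similitudes_range_eq hc hodd hS L.2.1
    _ = _ := by simp

end EvenUnimodular

section Reduction

variable {ι : Type*} (p : ℕ)

/-- Reduction modulo `p` of integral vectors. -/
def redVec : (ι → ℤ) →ₗ[ℤ] ι → ZMod p :=
  (Algebra.linearMap ℤ (ZMod p)).compLeft ι

lemma redVec_apply (x : ι → ℤ) : redVec p x = fun i ↦ (x i : ZMod p) :=
  rfl

lemma redVec_surjective : Function.Surjective (redVec p : (ι → ℤ) →ₗ[ℤ] ι → ZMod p) :=
  (ZMod.intCast_surjective (n := p)).comp_left

lemma redVec_eq_zero_iff {x : ι → ℤ} : redVec p x = 0 ↔ ∃ z, x = (p : ℤ) • z := by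
  simp only [funext_iff, redVec_apply, Pi.zero_apply, ZMod.intCast_zmod_eq_zero_iff_dvd,
    Pi.smul_apply, smul_eq_mul]
  exact Classical.skolem

variable [Fintype ι]

lemma IsScaledSelfDual.exists_eq_comap_redVec {S : Matrix ι ι ℤ} {L : Submodule ℤ (ι → ℤ)}
    (hL : IsScaledSelfDual S p L) :
    ∃ W : Submodule (ZMod p) (ι → ZMod p), (W.restrictScalars ℤ).comap (redVec p) = L := by
  refine ⟨AddSubgroup.toZModSubmodule p (L.map (redVec p)).toAddSubgroup, ?_⟩
  have : LinearMap.ker (redVec p) ≤ L := fun x hx ↦ by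
    obtain ⟨z, rfl⟩ := (redVec_eq_zero_iff p).mp hx
    exact hL.smul_mem z
  exact (Submodule.comap_map_eq (redVec p) L).trans (sup_eq_left.mpr this)

variable [DecidableEq ι]

/-- The bilinear form with Gram matrix `S` modulo `p`. -/
def redForm (S : Matrix ι ι ℤ) : LinearMap.BilinForm (ZMod p) (ι → ZMod p) :=
  Matrix.toBilin' (S.map (Int.castRingHom (ZMod p)))

lemma redForm_redVec (S : Matrix ι ι ℤ) (x y : ι → ℤ) :
    redForm p S (redVec p x) (redVec p y) = ((x ⬝ᵥ S *ᵥ y : ℤ) : ZMod p) := by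
  rw [redForm, Matrix.toBilin'_apply', intCast_dotProduct_mulVec]
  rfl

lemma isSymm_redForm {S : Matrix ι ι ℤ} (hS : S.IsSymm) : (redForm p S).IsSymm :=
  Matrix.isSymm_toBilin'_iff_isSymm.mpr (hS.map _)

variable [Fact p.Prime]

lemma isScaledSelfDual_comap_redVec_iff {S : Matrix ι ι ℤ} {W : Submodule (ZMod p) (ι → ZMod p)} :
    IsScaledSelfDual S p ((W.restrictScalars ℤ).comap (redVec p)) ↔
      IsLagrangian (redForm p S) W := by
  simp only [IsScaledSelfDual, IsLagrangian, SetLike.ext_iff,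
    LinearMap.BilinForm.mem_orthogonal_iff, (redVec_surjective p).forall, Submodule.mem_comap,
    Submodule.restrictScalars_mem, redForm_redVec, ZMod.intCast_zmod_eq_zero_iff_dvd]
  exact forall_congr' fun _ ↦ iff_comm

/-- Sublattices equal to their dual correspond to Lagrangian subspaces modulo `p`. -/
def scaledSelfDualEquiv (S : Matrix ι ι ℤ) :
    {W // IsLagrangian (redForm p S) W} ≃ {L // IsScaledSelfDual S p L} :=
  .ofBijective (fun W ↦ ⟨_, (isScaledSelfDual_comap_redVec_iff p).mpr W.2⟩) <| by
    refine ⟨fun W W' h ↦ Subtype.ext ?_, fun ⟨L, hL⟩ ↦ ?_⟩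
    · exact Submodule.restrictScalars_injective ℤ _ _
        (Submodule.comap_injective_of_surjective (redVec_surjective p) (congrArg Subtype.val h))
    · obtain ⟨W, rfl⟩ := hL.exists_eq_comap_redVec
      exact ⟨⟨W, (isScaledSelfDual_comap_redVec_iff p).mp hL⟩, rfl⟩

omit [DecidableEq ι] in
lemma finite_isScaledSelfDual (S : Matrix ι ι ℤ) : Finite {L // IsScaledSelfDual S p L} := by
  classical
  exact .of_equiv _ (scaledSelfDualEquiv p S)

lemma card_isScaledSelfDual_mem (S : Matrix ι ι ℤ) (y : ι → ℤ) :
    Nat.card {L // IsScaledSelfDual S p L ∧ y ∈ L} =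
      Nat.card {W // IsLagrangian (redForm p S) W ∧ redVec p y ∈ W} :=
  Nat.card_congr <| (Equiv.subtypeSubtypeEquivSubtypeInter _ (y ∈ ·)).symm.trans <|
    ((scaledSelfDualEquiv p S).subtypeEquiv fun _ ↦ Iff.rfl).symm.trans
      (Equiv.subtypeSubtypeEquivSubtypeInter _ (redVec p y ∈ ·))

variable {m : ℕ} {S : Matrix (Fin m) (Fin m) ℤ} {p}

lemma det_map_castRingHom (hS : S.det = 1) : (S.map (Int.castRingHom (ZMod p))).det = 1 := by
  rw [← RingHom.mapMatrix_apply, ← RingHom.map_det, hS, map_one]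

lemma nondegenerate_redForm (hS : S.det = 1) : (redForm p S).Nondegenerate := by
  refine LinearMap.BilinForm.nondegenerate_toBilin'_of_det_ne_zero' _ ?_
  rw [det_map_castRingHom hS]
  exact one_ne_zero

lemma hasHyperbolicCount_redForm (hp : p ≠ 2) {l : ℕ} (hm : m = 2 * l) (hl : Even l)
    (hS : S.IsSymm) (hdet : S.det = 1) : HasHyperbolicCount (redForm p S) l := by
  refine hasHyperbolicCount_toBilin' (by rwa [ZMod.ringChar_zmod_n]) (by simpa using hm)
    (hS.map _) ?_ ?_
  · rw [det_map_castRingHom hdet]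
    exact one_ne_zero
  · rw [det_map_castRingHom hdet, hl.neg_one_pow, one_mul]
    exact .one

/-- The second term accounts for `y ∈ p ℤ^m`, which lies in every self-dual sublattice. -/
theorem card_isScaledSelfDual_mem_eq (hp : p ≠ 2) {l : ℕ} (hm : m = 2 * (l + 1))
    (hl : Even (l + 1)) (hS : S.IsSymm) (hdet : S.det = 1) (y : Fin m → ℤ) :
    Nat.card {L // IsScaledSelfDual S p L ∧ y ∈ L} = (∏ i ∈ Finset.range l, (p ^ i + 1)) *
      ((if (p : ℤ) ∣ y ⬝ᵥ S *ᵥ y then 1 else 0) + p ^ l * if redVec p y = 0 then 1 else 0) := by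
  have h2 : (2 : ZMod p) ≠ 0 := Ring.two_ne_zero (by rwa [ZMod.ringChar_zmod_n])
  have hsymm := isSymm_redForm p hS
  have hnd := nondegenerate_redForm (p := p) hdet
  have hdim : Module.finrank (ZMod p) (Fin m → ZMod p) = 2 * (l + 1) := by simpa using hm
  have hcount := hasHyperbolicCount_redForm hp hm hl hS hdet
  rw [card_isScaledSelfDual_mem]
  have hiso : redForm p S (redVec p y) (redVec p y) = 0 ↔ (p : ℤ) ∣ y ⬝ᵥ S *ᵥ y := by
    rw [redForm_redVec, ZMod.intCast_zmod_eq_zero_iff_dvd]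
  by_cases hy : redVec p y = 0
  · have hdvd : (p : ℤ) ∣ y ⬝ᵥ S *ᵥ y := hiso.mp (by rw [hy, map_zero])
    simp only [hy, zero_mem, and_true, if_pos hdvd, if_true, mul_one]
    rw [card_isLagrangian h2 hsymm hnd hdim hcount, Nat.card_zmod, Finset.prod_range_succ,
      add_comm 1]
  simp only [hy, if_false, mul_zero, add_zero]
  split_ifs with hdvd
  · rw [card_isLagrangian_mem h2 hsymm hnd hdim hcount hy (hiso.mpr hdvd), Nat.card_zmod, mul_one]
  · rw [mul_zero, Nat.card_eq_zero]
    exact .inl ⟨fun ⟨W, hW, hyW⟩ ↦ hdvd (hiso.mp (hW.mem_iff.mp hyW _ hyW))⟩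

end Reduction

section ThetaSeries

variable {m : ℕ} {S T : Matrix (Fin m) (Fin m) ℤ}

/-- The general term of the theta series of `S`. -/
def thetaTerm (S : Matrix (Fin m) (Fin m) ℤ) (τ : ℂ) (x : Fin m → ℤ) : ℂ :=
  cexp (π * I * τ * ((x ⬝ᵥ S *ᵥ x : ℤ) : ℂ))

lemma norm_thetaTerm (S : Matrix (Fin m) (Fin m) ℤ) (τ : ℂ) (x : Fin m → ℤ) :
    ‖thetaTerm S τ x‖ = rexp (-(π * τ.im) * ((x ⬝ᵥ S *ᵥ x : ℤ) : ℝ)) := by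
  rw [thetaTerm, Complex.norm_exp]
  congr 1
  simp

lemma hasSum_thetaTerm (hS : (S.map ((↑) : ℤ → ℝ)).PosDef) {τ : ℂ} (hτ : 0 < τ.im) :
    HasSum (thetaTerm S τ) (thetaSeries S τ) := by
  refine Summable.hasSum (.of_norm ?_)
  simp_rw [norm_thetaTerm]
  exact summable_exp_neg_mul_quadForm hS (by positivity)

end ThetaSeries

section HeckeOperator

/-- The Hecke operator `T_p` in weight `k` and level one, on functions of period one. -/
def heckeOp (p k : ℕ) (f : ℂ → ℂ) (τ : ℂ) : ℂ :=
  (p : ℂ) ^ (k - 1) * f (p * τ) + (p : ℂ)⁻¹ * ∑ b ∈ Finset.range p, f ((τ + b) / p)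

lemma heckeOp_sub (p k : ℕ) (f g : ℂ → ℂ) (τ : ℂ) :
    heckeOp p k (fun z ↦ f z - g z) τ = heckeOp p k f τ - heckeOp p k g τ := by
  simp only [heckeOp, Finset.sum_sub_distrib]
  ring

lemma heckeOp_const_mul (p k : ℕ) (c : ℂ) (f : ℂ → ℂ) (τ : ℂ) :
    heckeOp p k (fun z ↦ c * f z) τ = c * heckeOp p k f τ := by
  simp only [heckeOp, ← Finset.mul_sum]
  ring

lemma heckeOp_sum {ι : Type*} (p k : ℕ) (s : Finset ι) (f : ι → ℂ → ℂ) (τ : ℂ) :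
    heckeOp p k (fun z ↦ ∑ i ∈ s, f i z) τ = ∑ i ∈ s, heckeOp p k (f i) τ := by
  simp only [heckeOp, Finset.mul_sum, Finset.sum_add_distrib]
  rw [Finset.sum_comm]

lemma hasSum_ite_iff {α β : Type*} {f : β → ℂ} {a : ℂ} {i : α → β} (hi : Function.Injective i)
    (P : β → Prop) [DecidablePred P] (hP : ∀ y, P y ↔ y ∈ Set.range i) :
    HasSum (fun y ↦ if P y then f y else 0) a ↔ HasSum (fun x ↦ f (i x)) a := by
  rw [← hi.hasSum_iff fun y hy ↦ if_neg ((hP y).not.mpr hy)]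
  exact iff_of_eq (congrArg (HasSum · a) (funext fun x ↦ if_pos ((hP _).mpr ⟨x, rfl⟩)))

lemma im_natCast_mul (p : ℕ) (τ : ℂ) : ((p : ℂ) * τ).im = p * τ.im := by
  simp

lemma im_add_natCast_div (p b : ℕ) (τ : ℂ) : ((τ + b) / (p : ℂ)).im = τ.im / p := by
  simp [Complex.div_natCast_im]

lemma sum_range_exp_two_pi_mul {N : ℕ} (hN : N ≠ 0) (r : ℤ) :
    ∑ b ∈ Finset.range N, cexp (2 * π * I * (b * r / N)) = if (N : ℤ) ∣ r then (N : ℂ) else 0 := by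
  have hζ := Complex.isPrimitiveRoot_exp N hN
  set ζ := cexp (2 * π * I / N)
  have hterm (b : ℕ) : cexp (2 * π * I * (b * r / N)) = (ζ ^ r) ^ b := by
    rw [← zpow_natCast, ← zpow_mul, ← Complex.exp_int_mul]
    congr 1
    push_cast
    ring
  simp only [hterm]
  split_ifs with hr
  · simp [(hζ.zpow_eq_one_iff_dvd r).mpr hr]
  · have hpow : (ζ ^ r) ^ N = 1 := by
      rw [← zpow_natCast, zpow_comm, zpow_natCast, hζ.pow_eq_one, one_zpow]
    rw [geom_sum_eq (mt (hζ.zpow_eq_one_iff_dvd r).mp hr), hpow, sub_self, zero_div]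

variable {p m : ℕ} {S T : Matrix (Fin m) (Fin m) ℤ} {τ : ℂ}

lemma sum_range_thetaTerm (hp : Odd p) (hS : S.IsSymm) (hev : ∀ i, Even (S i i)) (τ : ℂ)
    (x : Fin m → ℤ) : ∑ b ∈ Finset.range p, thetaTerm S ((τ + b) / p) x =
      p * if (p : ℤ) ∣ x ⬝ᵥ S *ᵥ x then thetaTerm S (τ / p) x else 0 := by
  obtain ⟨r, hr⟩ := (even_dotProduct_mulVec_self hS hev x).two_dvd
  have hterm (b : ℕ) : thetaTerm S ((τ + b) / p) x =
      thetaTerm S (τ / p) x * cexp (2 * π * I * (b * r / p)) := by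
    rw [thetaTerm, thetaTerm, ← Complex.exp_add, hr]
    congr 1
    push_cast
    ring
  have hdvd : (p : ℤ) ∣ 2 * r ↔ (p : ℤ) ∣ r :=
    ⟨(Nat.isCoprime_iff_coprime.mpr (Nat.coprime_two_right.mpr hp)).dvd_of_dvd_mul_left,
      fun h ↦ h.mul_left 2⟩
  simp only [hterm, ← Finset.mul_sum, sum_range_exp_two_pi_mul hp.pos.ne', hr, hdvd]
  split_ifs <;> ring

lemma hasSum_heckeOp_thetaSeries (hp : Odd p) (hS : IsPosDefEvenUnimodular S)
    (k : ℕ) (hτ : 0 < τ.im) :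
    HasSum (fun y ↦ ((if (p : ℤ) ∣ y ⬝ᵥ S *ᵥ y then 1 else 0) +
      (p : ℂ) ^ (k - 1) * if redVec p y = 0 then 1 else 0) * thetaTerm S (τ / p) y)
      (heckeOp p k (thetaSeries S) τ) := by
  have hp0 : (p : ℂ) ≠ 0 := Nat.cast_ne_zero.mpr hp.pos.ne'
  have hpr : (0 : ℝ) < p := Nat.cast_pos.mpr hp.pos
  have hmul : HasSum (fun y ↦ if redVec p y = 0 then thetaTerm S (τ / p) y else 0)
      (thetaSeries S (p * τ)) := by
    rw [hasSum_ite_iff (i := fun z : Fin m → ℤ ↦ (p : ℤ) • z)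
      (smul_right_injective _ (Int.natCast_ne_zero.mpr hp.pos.ne')) _ fun y ↦ ?_]
    · refine (hasSum_thetaTerm hS.2.1 (by rw [im_natCast_mul]; positivity)).congr_fun fun z ↦ ?_
      rw [thetaTerm, thetaTerm, Matrix.mulVec_smul, smul_dotProduct, dotProduct_smul,
        smul_eq_mul, smul_eq_mul]
      congr 1
      push_cast
      field_simp
    · simp only [redVec_eq_zero_iff, Set.mem_range, eq_comm (a := y)]
  have hdiv := hasSum_sum fun b (_ : b ∈ Finset.range p) ↦
    hasSum_thetaTerm hS.2.1 (τ := (τ + b) / p) (by rw [im_add_natCast_div]; positivity)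
  refine ((hmul.mul_left ((p : ℂ) ^ (k - 1))).add (hdiv.mul_left (p : ℂ)⁻¹)).congr_fun fun y ↦ ?_
  rw [sum_range_thetaTerm hp hS.1 hS.2.2.2, inv_mul_cancel_left₀ hp0]
  simp only [add_mul, mul_assoc, ite_mul, one_mul, zero_mul]
  ring

open Classical in
lemma hasSum_card_similitudes_mul_thetaTerm {c : ℤ} (hc : 0 < c)
    (hS : (S.map ((↑) : ℤ → ℝ)).PosDef) (hT : (T.map ((↑) : ℤ → ℝ)).PosDef) (hT' : IsUnit T.det)
    (hτ : 0 < τ.im) :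
    HasSum (fun y ↦ (Nat.card {B // B ∈ similitudes c S T ∧ y ∈ LinearMap.range B.mulVecLin} : ℂ) *
      thetaTerm S (τ / c) y) (Nat.card (similitudes c S T) * thetaSeries T τ) := by
  have hc0 : (c : ℂ) ≠ 0 := Int.cast_ne_zero.mpr hc.ne'
  have := (finite_setOf_transpose_mul_mul_eq hS (c • T)).fintype
  have : Fintype (similitudes c S T) := this
  have hterm (B : similitudes c S T) :
      HasSum (fun y ↦ if y ∈ LinearMap.range B.1.mulVecLin then thetaTerm S (τ / c) y else 0)
        (thetaSeries T τ) := by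
    refine (hasSum_ite_iff (mulVec_injective_of_mem_similitudes hc.ne' hT' B.2) _
      fun _ ↦ Iff.rfl).mpr ?_
    refine (hasSum_thetaTerm hT hτ).congr_fun fun x ↦ ?_
    rw [thetaTerm, thetaTerm, dotProduct_mulVec_of_mem_similitudes B.2]
    congr 1
    push_cast
    field_simp
  have hsum := hasSum_sum fun B (_ : B ∈ Finset.univ) ↦ hterm B
  rw [Finset.sum_const, Finset.card_univ, nsmul_eq_mul, ← Nat.card_eq_fintype_card] at hsum
  refine hsum.congr_fun fun y ↦ ?_
  rw [← Finset.sum_filter, Finset.sum_const, nsmul_eq_mul, ← Fintype.card_subtype,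
    ← Nat.card_eq_fintype_card]
  exact congrArg (fun n : ℕ ↦ (n : ℂ) * _)
    (Nat.card_congr (Equiv.subtypeSubtypeEquivSubtypeInter _ _).symm)

variable {R : Finset (Matrix (Fin m) (Fin m) ℤ)}

/-- Eichler's commutation relation. -/
theorem IsClassRepresentatives.sum_card_similitudes_mul_thetaSeries (hR : IsClassRepresentatives R)
    [Fact p.Prime] (hp : p ≠ 2) {k : ℕ} (hm : m = 2 * k) (hk0 : 0 < k) (hk : Even k)
    (hS : IsPosDefEvenUnimodular S) (hτ : 0 < τ.im) :
    ∑ T ∈ R, (autCard T : ℂ)⁻¹ * (Nat.card (similitudes p S T) * thetaSeries T τ) =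
      (∏ i ∈ Finset.range (k - 1), ((p : ℂ) ^ i + 1)) * heckeOp p k (thetaSeries S) τ := by
  obtain ⟨l, rfl⟩ := Nat.exists_eq_succ_of_ne_zero hk0.ne'
  have hpodd : Odd p := (Fact.out : p.Prime).odd_of_ne_two hp
  have hp0 : (0 : ℤ) < p := Int.natCast_pos.mpr hpodd.pos
  have hleft := hasSum_sum fun T (hT : T ∈ R) ↦
    (hasSum_card_similitudes_mul_thetaTerm hp0 hS.2.1 (hR.isPosDefEvenUnimodular T hT).2.1
      (isUnit_det (hR.isPosDefEvenUnimodular T hT)) hτ).mul_left (autCard T : ℂ)⁻¹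
  refine hleft.unique (((hasSum_heckeOp_thetaSeries hpodd hS (l + 1) hτ).mul_left _).congr_fun
    fun y ↦ ?_)
  have := finite_isScaledSelfDual p S
  simp only [← mul_assoc, ← Finset.sum_mul]
  rw [hR.sum_card_similitudes_mem_range hp0 (mod_cast hpodd) hS,
    card_isScaledSelfDual_mem_eq hp hm hk hS.1 hS.2.2.1]
  push_cast
  rfl

lemma IsClassRepresentatives.sum_card_similitudes (hR : IsClassRepresentatives R)
    [Fact p.Prime] (hp : p ≠ 2) {k : ℕ} (hm : m = 2 * k) (hk0 : 0 < k) (hk : Even k)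
    (hS : IsPosDefEvenUnimodular S) :
    ∑ T ∈ R, (autCard T : ℂ)⁻¹ * Nat.card (similitudes p S T) =
      (∏ i ∈ Finset.range (k - 1), ((p : ℂ) ^ i + 1)) * (p ^ (k - 1) + 1) := by
  obtain ⟨l, rfl⟩ := Nat.exists_eq_succ_of_ne_zero hk0.ne'
  have hpodd : Odd p := (Fact.out : p.Prime).odd_of_ne_two hp
  have := finite_isScaledSelfDual p S
  have h := hR.sum_card_similitudes_mem_range (Int.natCast_pos.mpr hpodd.pos) (mod_cast hpodd) hS 0
  rw [card_isScaledSelfDual_mem_eq hp hm hk hS.1 hS.2.2.1] at h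
  simp only [zero_mem, and_true, zero_dotProduct, dvd_zero, if_true, map_zero] at h
  push_cast at h
  rw [mul_one, add_comm 1] at h
  exact h

theorem IsClassRepresentatives.heckeOp_sum_thetaSeries (hR : IsClassRepresentatives R)
    [Fact p.Prime] (hp : p ≠ 2) {k : ℕ} (hm : m = 2 * k) (hk0 : 0 < k) (hk : Even k)
    (hτ : 0 < τ.im) :
    heckeOp p k (fun z ↦ ∑ S ∈ R, (autCard S : ℂ)⁻¹ * thetaSeries S z) τ =
      (p ^ (k - 1) + 1) * ∑ S ∈ R, (autCard S : ℂ)⁻¹ * thetaSeries S τ := by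
  have hp0 : (p : ℤ) ≠ 0 := Int.natCast_ne_zero.mpr (Fact.out : p.Prime).ne_zero
  have hN : ∏ i ∈ Finset.range (k - 1), ((p : ℂ) ^ i + 1) ≠ 0 := by
    exact_mod_cast (Finset.prod_pos fun i _ ↦ Nat.succ_pos (p ^ i)).ne'
  refine mul_left_cancel₀ hN ?_
  calc _ = ∑ S ∈ R, ∑ T ∈ R, (autCard S : ℂ)⁻¹ *
          ((autCard T : ℂ)⁻¹ * (Nat.card (similitudes p S T) * thetaSeries T τ)) := by
        simp only [heckeOp_sum, heckeOp_const_mul, Finset.mul_sum (s := R),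
          mul_left_comm (∏ _ ∈ _, _)]
        refine Finset.sum_congr rfl fun S hS ↦ ?_
        rw [← hR.sum_card_similitudes_mul_thetaSeries hp hm hk0 hk
          (hR.isPosDefEvenUnimodular S hS) hτ, Finset.mul_sum]
    _ = ∑ T ∈ R, (∑ S ∈ R, (autCard S : ℂ)⁻¹ * Nat.card (similitudes p T S)) *
          ((autCard T : ℂ)⁻¹ * thetaSeries T τ) := by
        rw [Finset.sum_comm]
        refine Finset.sum_congr rfl fun T hT ↦ ?_
        rw [Finset.sum_mul]
        refine Finset.sum_congr rfl fun S hS ↦ ?_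
        have hS' := hR.isPosDefEvenUnimodular S hS
        have hT' := hR.isPosDefEvenUnimodular T hT
        rw [card_similitudes_comm hp0 hS'.1 hT'.1 (isUnit_det hS') (isUnit_det hT')]
        ring
    _ = _ := by
        rw [Finset.sum_congr rfl fun T hT ↦ by
          rw [hR.sum_card_similitudes hp hm hk0 hk (hR.isPosDefEvenUnimodular T hT)],
          ← Finset.mul_sum, mul_assoc]

end HeckeOperator

section PoissonSummation

variable {ι : Type*}

/-- The half-open unit box with lower corner `a`. -/
def unitBox (a : ι → ℝ) : Set (ι → ℝ) :=
  {x | ∀ i, x i ∈ Ioc (a i) (a i + 1)}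

lemma preimage_add_right_unitBox (a b : ι → ℝ) : (· + b) ⁻¹' unitBox a = unitBox (a - b) := by
  ext x
  refine forall_congr' fun i ↦ ?_
  simp only [Pi.add_apply, Pi.sub_apply, mem_Ioc]
  constructor <;> rintro ⟨h1, h2⟩ <;> constructor <;> linarith

lemma iUnion_unitBox_intCast : ⋃ l : ι → ℤ, unitBox (fun i ↦ (l i : ℝ)) = univ := by
  refine eq_univ_of_forall fun x ↦ mem_iUnion.mpr ⟨fun i ↦ ⌈x i⌉ - 1, fun i ↦ ?_⟩
  have h1 := Int.ceil_lt_add_one (x i)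
  have h2 := Int.le_ceil (x i)
  constructor <;> push_cast <;> linarith

lemma pairwise_disjoint_unitBox_intCast :
    Pairwise (Function.onFun Disjoint fun l : ι → ℤ ↦ unitBox (fun i ↦ (l i : ℝ))) := by
  intro l l' hne
  refine Set.disjoint_left.mpr fun x hx hx' ↦ hne (funext fun i ↦ ?_)
  obtain ⟨h1, h2⟩ := hx i
  obtain ⟨h3, h4⟩ := hx' i
  have h5 : (l i : ℝ) < l' i + 1 := by linarith
  have h6 : (l' i : ℝ) < l i + 1 := by linarith
  norm_cast at h5 h6
  omega

lemma measurableSet_unitBox [Countable ι] (a : ι → ℝ) : MeasurableSet (unitBox a) :=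
  MeasurableSet.univ_pi' fun _ ↦ measurableSet_Ioc

/-- The sum of the translates of a function along the integer lattice. -/
def periodize (f : (ι → ℝ) → ℂ) (x : ι → ℝ) : ℂ :=
  ∑' l : ι → ℤ, f (x + fun i ↦ (l i : ℝ))

lemma periodize_add_intCast (f : (ι → ℝ) → ℂ) (x : ι → ℝ) (l : ι → ℤ) :
    periodize f (x + fun i ↦ (l i : ℝ)) = periodize f x := by
  rw [periodize, periodize,
    ← (Equiv.addLeft l).tsum_eq fun l' : ι → ℤ ↦ f (x + fun i ↦ (l' i : ℝ))]
  refine tsum_congr fun l' ↦ congrArg f (funext fun i ↦ ?_)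
  simp only [Pi.add_apply, Equiv.coe_addLeft, Int.cast_add]
  ring

lemma exists_continuousMap_unitAddTorus {Φ : (ι → ℝ) → ℂ} (hΦ : Continuous Φ)
    (hper : ∀ (x : ι → ℝ) (l : ι → ℤ), Φ (x + fun i ↦ (l i : ℝ)) = Φ x) :
    ∃ F : C(UnitAddTorus ι, ℂ), ∀ x, F (fun i ↦ (x i : UnitAddCircle)) = Φ x := by
  have hq : IsOpenQuotientMap fun (x : ι → ℝ) i ↦ (x i : UnitAddCircle) :=
    IsOpenQuotientMap.piMap fun _ ↦ QuotientAddGroup.isOpenQuotientMap_mk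
  let q : C(ι → ℝ, UnitAddTorus ι) := ⟨_, hq.continuous⟩
  have hfactors : Function.FactorsThrough Φ q := by
    intro x y hxy
    have hcoord (i : ι) : ∃ n : ℤ, x i = y i + n := by
      obtain ⟨n, hn⟩ := AddSubgroup.mem_zmultiples_iff.mp
        (QuotientAddGroup.eq_iff_sub_mem.mp (congrFun hxy i))
      exact ⟨n, by rw [zsmul_eq_mul, mul_one] at hn; linarith⟩
    choose n hn using hcoord
    rw [← hper y n]
    exact congrArg Φ (funext hn)
  have hq' : Topology.IsQuotientMap q := hq.isQuotientMap
  exact ⟨hq'.lift ⟨Φ, hΦ⟩ hfactors, DFunLike.congr_fun (hq'.lift_comp ⟨Φ, hΦ⟩ hfactors)⟩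

variable [Fintype ι]

lemma norm_le_one_of_mem_unitBox_zero {x : ι → ℝ} (hx : x ∈ unitBox 0) : ‖x‖ ≤ 1 := by
  refine (pi_norm_le_iff_of_nonneg zero_le_one).mpr fun i ↦ ?_
  obtain ⟨h1, h2⟩ : 0 < x i ∧ x i ≤ 0 + 1 := hx i
  rw [Real.norm_eq_abs, abs_le]
  constructor <;> linarith

lemma volume_unitBox (a : ι → ℝ) : MeasureTheory.volume (unitBox a) = 1 := by
  have : unitBox a = univ.pi fun i ↦ Ioc (a i) (a i + 1) := by
    ext x; simp [unitBox]
  rw [this, MeasureTheory.volume_pi_pi]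
  simp

lemma setIntegral_unitBox {E : Type*} [NormedAddCommGroup E] [NormedSpace ℝ E]
    (g : (ι → ℝ) → E) (a : ι → ℝ) :
    ∫ x in unitBox a, g x = ∫ x in unitBox 0, g (x + a) := by
  rw [← (MeasureTheory.measurePreserving_add_right _ a).setIntegral_preimage_emb
    (measurableEmbedding_addRight a) g, preimage_add_right_unitBox, sub_self]

lemma integrableOn_unitBox_iff {E : Type*} [NormedAddCommGroup E] {g : (ι → ℝ) → E} {a : ι → ℝ} :
    MeasureTheory.IntegrableOn g (unitBox a) ↔
      MeasureTheory.IntegrableOn (fun x ↦ g (x + a)) (unitBox 0) := by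
  rw [← (MeasureTheory.measurePreserving_add_right _ a).integrableOn_comp_preimage
    (measurableEmbedding_addRight a), preimage_add_right_unitBox, sub_self]
  rfl

/-- The translates of a function along the integer lattice are dominated, uniformly on bounded
sets, by a summable family. -/
def LatticeDominated (f : (ι → ℝ) → ℂ) : Prop :=
  ∀ B : ℝ, ∃ u : (ι → ℤ) → ℝ, Summable u ∧
    ∀ x : ι → ℝ, ‖x‖ ≤ B → ∀ l : ι → ℤ, ‖f (x + fun i ↦ (l i : ℝ))‖ ≤ u l

lemma LatticeDominated.continuous_periodize {f : (ι → ℝ) → ℂ} (hd : LatticeDominated f)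
    (hf : Continuous f) : Continuous (periodize f) := by
  rw [continuous_iff_continuousAt]
  intro x
  obtain ⟨u, hu, hb⟩ := hd (‖x‖ + 1)
  refine ContinuousOn.continuousAt (s := Metric.closedBall x 1) ?_
    (Metric.closedBall_mem_nhds x one_pos)
  refine continuousOn_tsum (fun l ↦ (hf.comp (by fun_prop)).continuousOn) hu fun l y hy ↦ hb y ?_ l
  have h1 := norm_le_norm_add_norm_sub' y x
  rw [mem_closedBall_iff_norm] at hy
  linarith

lemma LatticeDominated.integrableOn_unitBox {g : (ι → ℝ) → ℂ} (hd : LatticeDominated g)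
    (hg : Continuous g) (l : ι → ℤ) :
    MeasureTheory.IntegrableOn (fun x ↦ g (x + fun i ↦ (l i : ℝ))) (unitBox 0) := by
  obtain ⟨u, -, hb⟩ := hd 1
  refine MeasureTheory.IntegrableOn.of_bound (by simp [volume_unitBox])
    (hg.comp (by fun_prop)).aestronglyMeasurable (u l) ?_
  filter_upwards [MeasureTheory.ae_restrict_mem (measurableSet_unitBox 0)] with x hx
    using hb x (norm_le_one_of_mem_unitBox_zero hx) l

lemma LatticeDominated.summable_setIntegral_norm {g : (ι → ℝ) → ℂ} (hd : LatticeDominated g)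
    (hg : Continuous g) :
    Summable fun l : ι → ℤ ↦ ∫ x in unitBox 0, ‖g (x + fun i ↦ (l i : ℝ))‖ := by
  obtain ⟨u, hu, hb⟩ := hd 1
  refine Summable.of_nonneg_of_le
    (fun l ↦ MeasureTheory.integral_nonneg fun _ ↦ norm_nonneg _) (fun l ↦ ?_) hu
  calc ∫ x in unitBox 0, ‖g (x + fun i ↦ (l i : ℝ))‖ ≤ ∫ _ in unitBox (0 : ι → ℝ), u l :=
        MeasureTheory.setIntegral_mono_on (hd.integrableOn_unitBox hg l).norm
          (by simp [volume_unitBox]) (measurableSet_unitBox 0)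
          fun _ hx ↦ hb _ (norm_le_one_of_mem_unitBox_zero hx) l
    _ = u l := by simp [MeasureTheory.measureReal_def, volume_unitBox]

lemma LatticeDominated.setIntegral_periodize {g : (ι → ℝ) → ℂ} (hd : LatticeDominated g)
    (hg : Continuous g) : ∫ x in unitBox 0, periodize g x = ∫ x, g x := by
  have hint : MeasureTheory.IntegrableOn g (⋃ l : ι → ℤ, unitBox fun i ↦ (l i : ℝ)) := by
    refine MeasureTheory.integrableOn_iUnion_of_summable_integral_norm
      (fun l ↦ integrableOn_unitBox_iff.mpr (hd.integrableOn_unitBox hg l)) ?_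
    simpa only [setIntegral_unitBox fun x ↦ ‖g x‖] using hd.summable_setIntegral_norm hg
  calc ∫ x in unitBox 0, periodize g x
      = ∑' l : ι → ℤ, ∫ x in unitBox 0, g (x + fun i ↦ (l i : ℝ)) :=
        (MeasureTheory.integral_tsum_of_summable_integral_norm (hd.integrableOn_unitBox hg)
          (hd.summable_setIntegral_norm hg)).symm
    _ = ∑' l : ι → ℤ, ∫ x in unitBox (fun i ↦ (l i : ℝ)), g x := by
        simp only [← setIntegral_unitBox]
    _ = ∫ x, g x := by
        rw [← MeasureTheory.integral_iUnion (fun l ↦ measurableSet_unitBox _)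
          pairwise_disjoint_unitBox_intCast hint, iUnion_unitBox_intCast,
          MeasureTheory.setIntegral_univ]

lemma mFourier_coe (n : ι → ℤ) (x : ι → ℝ) :
    UnitAddTorus.mFourier n (fun i ↦ (x i : UnitAddCircle)) =
      cexp (2 * π * I * ((fun i ↦ (n i : ℝ)) ⬝ᵥ x : ℝ)) := by
  simp only [UnitAddTorus.mFourier, ContinuousMap.coe_mk, fourier_coe_apply, dotProduct]
  rw [← Complex.exp_sum]
  push_cast
  rw [Finset.mul_sum]
  congr 1
  refine Finset.sum_congr rfl fun i _ ↦ ?_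
  ring

lemma LatticeDominated.mFourierCoeff_eq_integral {f : (ι → ℝ) → ℂ} (hd : LatticeDominated f)
    (hf : Continuous f) {F : C(UnitAddTorus ι, ℂ)}
    (hF : ∀ x, F (fun i ↦ (x i : UnitAddCircle)) = periodize f x) (n : ι → ℤ) :
    UnitAddTorus.mFourierCoeff F n =
      ∫ x : ι → ℝ, UnitAddTorus.mFourier (-n) (fun i ↦ (x i : UnitAddCircle)) * f x := by
  set e : (ι → ℝ) → ℂ := fun x ↦ UnitAddTorus.mFourier (-n) (fun i ↦ (x i : UnitAddCircle)) with he
  have hec : Continuous e := (UnitAddTorus.mFourier (-n)).continuous.comp <|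
    continuous_pi fun i ↦ (AddCircle.continuous_mk' 1).comp (continuous_apply i)
  have hnorm (x : ι → ℝ) : ‖e x‖ ≤ 1 :=
    ((UnitAddTorus.mFourier (-n)).norm_coe_le_norm _).trans_eq UnitAddTorus.mFourier_norm
  have hper (x : ι → ℝ) (l : ι → ℤ) : e (x + fun i ↦ (l i : ℝ)) = e x := by
    simp only [he]
    congr 1
    funext i
    simp
  have hdom : LatticeDominated fun x ↦ e x * f x := by
    intro B
    obtain ⟨u, hu, hb⟩ := hd B
    refine ⟨u, hu, fun x hx l ↦ ?_⟩
    rw [norm_mul]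
    exact (mul_le_of_le_one_left (norm_nonneg _) (hnorm _)).trans (hb x hx l)
  rw [← hdom.setIntegral_periodize (hec.mul hf), UnitAddTorus.mFourierCoeff_eq_integral F n 0]
  refine MeasureTheory.setIntegral_congr_fun (measurableSet_unitBox 0) fun x _ ↦ ?_
  simp only [periodize, hper, tsum_mul_left, smul_eq_mul, hF]
  rfl

theorem LatticeDominated.tsum_eq_tsum_integral {f : (ι → ℝ) → ℂ} (hd : LatticeDominated f)
    (hf : Continuous f)
    (hs : Summable fun n : ι → ℤ ↦
      ∫ x : ι → ℝ, UnitAddTorus.mFourier (-n) (fun i ↦ (x i : UnitAddCircle)) * f x) :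
    ∑' l : ι → ℤ, f (fun i ↦ (l i : ℝ)) = ∑' n : ι → ℤ,
      ∫ x : ι → ℝ, UnitAddTorus.mFourier (-n) (fun i ↦ (x i : UnitAddCircle)) * f x := by
  obtain ⟨F, hF⟩ :=
    exists_continuousMap_unitAddTorus (hd.continuous_periodize hf) (periodize_add_intCast f)
  simp only [← hd.mFourierCoeff_eq_integral hf hF] at hs ⊢
  have hseries := UnitAddTorus.hasSum_mFourier_series_apply_of_summable hs
    fun i ↦ ((0 : ι → ℝ) i : UnitAddCircle)
  rw [hF] at hseries
  have hone (n : ι → ℤ) :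
      UnitAddTorus.mFourier n (fun i ↦ ((0 : ι → ℝ) i : UnitAddCircle)) = 1 := by
    rw [mFourier_coe, dotProduct_zero, ofReal_zero, mul_zero, Complex.exp_zero]
  simpa only [periodize, zero_add, hone, smul_eq_mul, mul_one] using hseries.tsum_eq.symm

end PoissonSummation

section ThetaInversion

open scoped MatrixOrder Matrix.Norms.L2Operator in
lemma exists_eq_transpose_mul_self {n : Type*} [Fintype n] {A : Matrix n n ℝ}
    (hA : A.PosSemidef) : ∃ B : Matrix n n ℝ, A = Bᵀ * B := by
  classical
  obtain ⟨B, hB⟩ := CStarAlgebra.nonneg_iff_eq_star_mul_self.mp hA.nonneg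
  exact ⟨B, by rw [hB, Matrix.star_eq_conjTranspose, Matrix.conjTranspose_eq_transpose_of_trivial]⟩

section GaussianIntegral

variable {ι : Type*} [Fintype ι]

lemma dotProduct_self_add_ge (x y : ι → ℝ) :
    (y ⬝ᵥ y) / 2 - x ⬝ᵥ x ≤ (x + y) ⬝ᵥ (x + y) := by
  simp only [dotProduct, Finset.sum_div, ← Finset.sum_sub_distrib, Pi.add_apply]
  exact Finset.sum_le_sum fun i _ ↦ by nlinarith [sq_nonneg (2 * x i + y i)]

lemma dotProduct_self_le_card_mul_sq {x : ι → ℝ} {B : ℝ} (hx : ‖x‖ ≤ B) :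
    x ⬝ᵥ x ≤ Fintype.card ι * B ^ 2 := by
  have h (i : ι) : x i * x i ≤ B ^ 2 := by
    rw [← sq]
    exact sq_le_sq.mpr (((norm_le_pi_norm x i).trans hx).trans (le_abs_self B))
  exact (Finset.sum_le_sum fun i _ ↦ h i).trans_eq (by simp)

lemma integral_comp_mulVec [DecidableEq ι] {B : Matrix ι ι ℝ} (hB : |B.det| = 1)
    {h : (ι → ℝ) → ℂ} (hh : Continuous h) : ∫ x, h (B *ᵥ x) = ∫ x, h x := by
  have hdet : B.det ≠ 0 := fun h0 ↦ by simp [h0] at hB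
  have hmap := Real.map_matrix_volume_pi_eq_smul_volume_pi hdet
  rw [abs_inv, hB, inv_one, ENNReal.ofReal_one, one_smul] at hmap
  have hc : Continuous (Matrix.toLin' B) := (Matrix.toLin' B).continuous_of_finiteDimensional
  conv_rhs => rw [← hmap, MeasureTheory.integral_map hc.aemeasurable hh.aestronglyMeasurable]
  rfl

variable {τ : ℂ}

lemma integral_cexp_dotProduct_mul_cexp (hτ : 0 < τ.im) (a : ι → ℝ) :
    ∫ v : ι → ℝ, cexp (2 * π * I * (a ⬝ᵥ v : ℝ)) * cexp (π * I * τ * (v ⬝ᵥ v : ℝ)) =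
      (I / τ) ^ ((Fintype.card ι : ℂ) / 2) * cexp (π * I * (-1 / τ) * (a ⬝ᵥ a : ℝ)) := by
  have hτ0 : τ ≠ 0 := fun h ↦ by simp [h] at hτ
  have hπ : (π : ℂ) ≠ 0 := ofReal_ne_zero.mpr Real.pi_ne_zero
  have hb : 0 < (-(π * I * τ)).re := by
    simpa [mul_assoc] using mul_pos Real.pi_pos hτ
  convert GaussianFourier.integral_cexp_neg_mul_sum_add hb fun i ↦ 2 * π * I * (a i : ℂ) using 2
  · funext v
    rw [← Complex.exp_add]
    congr 1
    simp only [dotProduct]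
    push_cast
    simp_rw [Finset.mul_sum, ← Finset.sum_add_distrib]
    exact Finset.sum_congr rfl fun i _ ↦ by ring
  · congr 1
    field_simp
    rw [Complex.I_sq]
  · congr 1
    simp only [dotProduct]
    push_cast
    rw [Finset.sum_div, Finset.mul_sum]
    refine Finset.sum_congr rfl fun i _ ↦ ?_
    field_simp
    ring_nf

lemma integral_cexp_quadForm [DecidableEq ι] {A : Matrix ι ι ℝ} (hA : A.PosSemidef)
    (hdet : A.det = 1) (hτ : 0 < τ.im) (w : ι → ℝ) :
    ∫ x : ι → ℝ, cexp (2 * π * I * (w ⬝ᵥ A *ᵥ x : ℝ)) * cexp (π * I * τ * (x ⬝ᵥ A *ᵥ x : ℝ)) =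
      (I / τ) ^ ((Fintype.card ι : ℂ) / 2) * cexp (π * I * (-1 / τ) * (w ⬝ᵥ A *ᵥ w : ℝ)) := by
  obtain ⟨B, rfl⟩ := exists_eq_transpose_mul_self hA
  have hB : |B.det| = 1 := by
    rw [Matrix.det_mul, Matrix.det_transpose, ← sq] at hdet
    exact (abs_eq zero_le_one).mpr (by simpa using hdet)
  have hform (x y : ι → ℝ) : x ⬝ᵥ (Bᵀ * B) *ᵥ y = (B *ᵥ x) ⬝ᵥ (B *ᵥ y) := by
    simpa using (mulVec_dotProduct_mulVec_mulVec B 1 x y).symm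
  simp_rw [hform]
  exact (integral_comp_mulVec hB (h := fun v ↦ cexp (2 * π * I * ((B *ᵥ w) ⬝ᵥ v : ℝ)) *
    cexp (π * I * τ * (v ⬝ᵥ v : ℝ))) (by fun_prop)).trans (integral_cexp_dotProduct_mul_cexp hτ _)

end GaussianIntegral

variable {m : ℕ} {S : Matrix (Fin m) (Fin m) ℤ} {τ : ℂ}

lemma latticeDominated_cexp_quadForm {A : Matrix (Fin m) (Fin m) ℝ} (hA : A.PosDef)
    (hτ : 0 < τ.im) : LatticeDominated fun x ↦ cexp (π * I * τ * (x ⬝ᵥ A *ᵥ x : ℝ)) := by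
  obtain ⟨c, hc, h⟩ := exists_pos_mul_dotProduct_self_le hA
  intro B
  have ha : 0 < π * τ.im * c := by positivity
  refine ⟨fun l ↦ rexp (π * τ.im * c * (m * B ^ 2)) *
    rexp (-(π * τ.im * c / 2) * ((l ⬝ᵥ l : ℤ) : ℝ)),
    (summable_exp_neg_mul_dotProduct_self m (half_pos ha)).mul_left _, fun x hx l ↦ ?_⟩
  set y : Fin m → ℝ := fun i ↦ (l i : ℝ) with hy
  have hre : (π * I * τ * ((x + y) ⬝ᵥ A *ᵥ (x + y) : ℝ)).re =
      -(π * τ.im * ((x + y) ⬝ᵥ A *ᵥ (x + y))) := by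
    simp [mul_assoc]
  have hl : ((l ⬝ᵥ l : ℤ) : ℝ) = y ⬝ᵥ y := by simp [dotProduct, hy]
  have hx' : x ⬝ᵥ x ≤ m * B ^ 2 := by simpa using dotProduct_self_le_card_mul_sq hx
  have h1 := mul_le_mul_of_nonneg_left (dotProduct_self_add_ge x y) ha.le
  have h2 := mul_le_mul_of_nonneg_left (h (x + y)) (by positivity : 0 ≤ π * τ.im)
  have h3 := mul_le_mul_of_nonneg_left hx' ha.le
  dsimp only
  rw [Complex.norm_exp, ← Real.exp_add, Real.exp_le_exp, hre, hl]
  linarith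

lemma integral_mFourier_mul_cexp_quadForm (hS : IsPosDefEvenUnimodular S) (hτ : 0 < τ.im)
    (x : Fin m → ℤ) :
    ∫ y : Fin m → ℝ, UnitAddTorus.mFourier (-(S *ᵥ -x)) (fun i ↦ (y i : UnitAddCircle)) *
        cexp (π * I * τ * (y ⬝ᵥ S.map ((↑) : ℤ → ℝ) *ᵥ y : ℝ)) =
      (I / τ) ^ ((m : ℂ) / 2) * thetaTerm S (-1 / τ) x := by
  have hdet : (S.map ((↑) : ℤ → ℝ)).det = 1 := by
    simpa [hS.2.2.1] using ((Int.castRingHom ℝ).map_det S).symm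
  have hlin (y : Fin m → ℝ) : (fun i ↦ (((-(S *ᵥ -x)) i : ℤ) : ℝ)) ⬝ᵥ y =
      (fun i ↦ (x i : ℝ)) ⬝ᵥ S.map ((↑) : ℤ → ℝ) *ᵥ y := by
    rw [dotProduct_mulVec_comm (hS.1.map _), dotProduct_comm]
    simp [Matrix.mulVec, dotProduct]
  simp_rw [mFourier_coe, hlin]
  rw [integral_cexp_quadForm hS.2.1.posSemidef hdet hτ, thetaTerm, ← intCast_dotProduct_mulVec,
    ofReal_intCast, Fintype.card_fin]

theorem thetaSeries_neg_one_div (hS : IsPosDefEvenUnimodular S) {k : ℕ} (hmk : m = 2 * k)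
    (hk : 4 ∣ k) (hτ : 0 < τ.im) : thetaSeries S (-1 / τ) = τ ^ k * thetaSeries S τ := by
  have hτ0 : τ ≠ 0 := fun h ↦ by simp [h] at hτ
  have hconst : (I / τ) ^ ((m : ℂ) / 2) = (τ ^ k)⁻¹ := by
    obtain ⟨j, rfl⟩ := hk
    rw [hmk, Nat.cast_mul, Nat.cast_two, mul_div_cancel_left₀ _ two_ne_zero, Complex.cpow_natCast,
      div_pow, pow_mul I, Complex.I_pow_four, one_pow, one_div]
  have him : 0 < (-1 / τ).im := by
    rw [neg_div, one_div, Complex.neg_im, Complex.inv_im, neg_div, neg_neg]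
    exact div_pos hτ (Complex.normSq_pos.mpr hτ0)
  -- `S` is unimodular, so the frequencies of the Poisson formula can be written as `-S x`.
  let e : (Fin m → ℤ) ≃ (Fin m → ℤ) := (Equiv.neg _).trans
    (S.toLinearEquiv' (S.invertibleOfIsUnitDet (isUnit_det hS))).toEquiv
  have hcoeff (x : Fin m → ℤ) := integral_mFourier_mul_cexp_quadForm hS hτ x
  rw [hconst] at hcoeff
  have hsummable := ((hasSum_thetaTerm hS.2.1 him).mul_left (τ ^ k)⁻¹).congr_fun hcoeff
  have hpoisson := (latticeDominated_cexp_quadForm hS.2.1 hτ).tsum_eq_tsum_integral (by fun_prop)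
    (e.summable_iff.mp hsummable.summable)
  have hS' : thetaSeries S τ = (τ ^ k)⁻¹ * thetaSeries S (-1 / τ) := by
    rw [← hsummable.tsum_eq]
    refine Eq.trans ?_ (hpoisson.trans (e.tsum_eq _).symm)
    exact tsum_congr fun l ↦ by rw [← intCast_dotProduct_mulVec, ofReal_intCast]
  rw [hS', mul_inv_cancel_left₀ (pow_ne_zero k hτ0)]

lemma thetaSeries_add_one (hS : S.IsSymm) (hev : ∀ i, Even (S i i)) (τ : ℂ) :
    thetaSeries S (τ + 1) = thetaSeries S τ := by
  refine tsum_congr fun x ↦ ?_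
  obtain ⟨r, hr⟩ := (even_dotProduct_mulVec_self hS hev x).two_dvd
  rw [Complex.exp_eq_exp_iff_exists_int, hr]
  exact ⟨r, by push_cast; ring⟩

lemma quadForm_pos (hS : (S.map ((↑) : ℤ → ℝ)).PosDef) {x : Fin m → ℤ} (hx : x ≠ 0) :
    0 < x ⬝ᵥ S *ᵥ x := by
  have hx' : (fun i ↦ (x i : ℝ)) ≠ 0 := fun h ↦ hx (funext fun i ↦ by simpa using congrFun h i)
  have := hS.dotProduct_mulVec_pos hx'
  rw [star_trivial, ← intCast_dotProduct_mulVec] at this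
  exact_mod_cast this

lemma norm_thetaTerm_le (hS : (S.map ((↑) : ℤ → ℝ)).PosDef) {a : ℝ} (ha : a ≤ τ.im)
    (x : Fin m → ℤ) : ‖thetaTerm S τ x‖ ≤ rexp (-(π * a) * ((x ⬝ᵥ S *ᵥ x : ℤ) : ℝ)) := by
  have hq : (0 : ℝ) ≤ ((x ⬝ᵥ S *ᵥ x : ℤ) : ℝ) := by
    rcases eq_or_ne x 0 with rfl | hx
    · simp
    · exact_mod_cast (quadForm_pos hS hx).le
  rw [norm_thetaTerm, Real.exp_le_exp, neg_mul, neg_mul, neg_le_neg_iff]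
  gcongr

lemma differentiableOn_thetaSeries (hS : (S.map ((↑) : ℤ → ℝ)).PosDef) :
    DifferentiableOn ℂ (thetaSeries S) {τ | 0 < τ.im} := by
  intro τ (hτ : 0 < τ.im)
  have hopen : IsOpen {z : ℂ | τ.im / 2 < z.im} := isOpen_lt continuous_const Complex.continuous_im
  have hdiff : DifferentiableOn ℂ (fun z ↦ ∑' x, thetaTerm S z x) {z | τ.im / 2 < z.im} :=
    Complex.differentiableOn_tsum_of_summable_norm
      (summable_exp_neg_mul_quadForm hS (a := π * (τ.im / 2)) (by positivity))
      (fun x ↦ by unfold thetaTerm; fun_prop) hopen fun x z hz ↦ norm_thetaTerm_le hS hz.le x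
  exact (hdiff.differentiableAt (hopen.mem_nhds (half_lt_self hτ))).differentiableWithinAt

lemma tendsto_thetaTerm (hS : (S.map ((↑) : ℤ → ℝ)).PosDef) (x : Fin m → ℤ) :
    Filter.Tendsto (thetaTerm S · x) (Filter.comap Complex.im Filter.atTop)
      (nhds (if x = 0 then 1 else 0)) := by
  split_ifs with hx
  · simpa [hx, thetaTerm] using tendsto_const_nhds
  · have hq : (0 : ℝ) < ((x ⬝ᵥ S *ᵥ x : ℤ) : ℝ) := by exact_mod_cast quadForm_pos hS hx
    rw [tendsto_zero_iff_norm_tendsto_zero]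
    simp_rw [norm_thetaTerm]
    refine Real.tendsto_exp_atBot.comp (Filter.Tendsto.atBot_mul_const hq ?_)
    exact Filter.tendsto_neg_atTop_atBot.comp
      (Filter.tendsto_comap.const_mul_atTop Real.pi_pos)

lemma tendsto_thetaSeries (hS : (S.map ((↑) : ℤ → ℝ)).PosDef) :
    Filter.Tendsto (thetaSeries S) (Filter.comap Complex.im Filter.atTop) (nhds 1) := by
  rw [← tsum_ite_eq (0 : Fin m → ℤ) fun _ ↦ (1 : ℂ)]
  refine tendsto_tsum_of_dominated_convergence
    (summable_exp_neg_mul_quadForm hS (a := π * 1) (by positivity)) (tendsto_thetaTerm hS) ?_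
  filter_upwards [Filter.preimage_mem_comap (Filter.eventually_ge_atTop (1 : ℝ))] with τ hτ x
    using norm_thetaTerm_le hS hτ x

end ThetaInversion

section Eisenstein

/-- The coprime pair `±(c, d)`, for `(c, d)` the bottom row of the chosen representative of a
coset in `Γ∞\SL₂(ℤ)`. -/
def bottomRow (x : Quotient (QuotientGroup.rightRel GammaInf) × ℤˣ) :
    EisensteinSeries.gammaSet 1 1 0 :=
  ⟨fun i ↦ (x.2 : ℤ) * x.1.out 1 i, by
    rw [EisensteinSeries.mem_gammaSet_one, isCoprime_mul_unit_left x.2.isUnit]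
    exact ModularGroup.bottom_row_coprime x.1.out⟩

lemma mul_inv_mem_GammaInf_iff (γ δ : SL(2, ℤ)) :
    δ * γ⁻¹ ∈ GammaInf ↔ δ 1 0 * γ 1 1 = δ 1 1 * γ 1 0 := by
  have hentry : (δ * γ⁻¹ : SL(2, ℤ)) 1 0 = δ 1 0 * γ 1 1 - δ 1 1 * γ 1 0 := by
    simp [Matrix.SpecialLinearGroup.coe_mul, Matrix.SpecialLinearGroup.coe_inv,
      Matrix.adjugate_fin_two, Matrix.mul_apply, Fin.sum_univ_two, sub_eq_add_neg]
  change (δ * γ⁻¹ : SL(2, ℤ)) 1 0 = 0 ↔ _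
  rw [hentry, sub_eq_zero]

lemma bottomRow_injective : Function.Injective bottomRow := by
  rintro ⟨q, u⟩ ⟨q', u'⟩ h
  have hrow (i : Fin 2) : (u : ℤ) * q.out 1 i = u' * q'.out 1 i :=
    congrFun (congrArg Subtype.val h) i
  have hq : q = q' := by
    rw [← Quotient.out_eq q, ← Quotient.out_eq q', Quotient.eq, QuotientGroup.rightRel_apply,
      mul_inv_mem_GammaInf_iff]
    refine mul_left_cancel₀ u'.ne_zero ?_
    linear_combination (-q.out 1 1) * hrow 0 + q.out 1 0 * hrow 1
  subst hq
  have hdet := q.out.det_coe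
  rw [Matrix.det_fin_two] at hdet
  refine Prod.ext rfl (Units.ext ?_)
  linear_combination (-(u : ℤ) + u') * hdet - q.out 0 1 * hrow 0 + q.out 0 0 * hrow 1

lemma exists_unit_row_eq_of_mem_GammaInf {η : SL(2, ℤ)} (hη : η ∈ GammaInf) :
    ∃ u : ℤˣ, ∀ (δ : SL(2, ℤ)) (i : Fin 2), (η * δ) 1 i = u * δ 1 i := by
  have hη10 : η 1 0 = 0 := hη
  have hdet : η 1 1 * η 0 0 = 1 := by
    have hd := η.det_coe
    rw [Matrix.det_fin_two, hη10] at hd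
    linarith
  refine ⟨Units.mkOfMulEqOne _ _ hdet, fun δ i ↦ ?_⟩
  rw [Matrix.SpecialLinearGroup.coe_mul, Matrix.mul_apply, Fin.sum_univ_two, hη10, zero_mul,
    zero_add, Units.val_mkOfMulEqOne]

lemma bottomRow_surjective : Function.Surjective bottomRow := by
  rintro ⟨v, hv⟩
  obtain ⟨γ, -, hγ⟩ :=
    ModularGroup.bottom_row_surj (R := ℤ) ((EisensteinSeries.mem_gammaSet_one v).mp hv)
  let q : Quotient (QuotientGroup.rightRel GammaInf) := Quotient.mk _ γ
  obtain ⟨u, hu⟩ := exists_unit_row_eq_of_mem_GammaInf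
    (QuotientGroup.rightRel_apply.mp (Quotient.exact (Quotient.out_eq q)))
  refine ⟨(q, u), Subtype.ext (funext fun i ↦ ?_)⟩
  have hrow := hu q.out i
  rw [inv_mul_cancel_right] at hrow
  exact hrow.symm.trans (congrFun hγ i)

open EisensteinSeries in
lemma eisSummand_bottomRow {k : ℕ} (hk : Even k) (z : UpperHalfPlane)
    (x : Quotient (QuotientGroup.rightRel GammaInf) × ℤˣ) :
    eisSummand k (bottomRow x) z = jsq z x.1 ^ (-((k : ℤ) / 2)) := by
  obtain ⟨q, u⟩ := x
  obtain ⟨j, rfl⟩ := hk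
  have hjsq : jsq z q = ((q.out 1 0 : ℂ) * z + q.out 1 1) ^ 2 := by
    conv_lhs => rw [← Quotient.out_eq q]
    rfl
  have hu : ((u : ℤ) : ℂ) ^ 2 = 1 := by
    rcases Int.units_eq_one_or u with rfl | rfl <;> simp
  have hhalf : ((j + j : ℕ) : ℤ) / 2 = j := by omega
  have hrow (i : Fin 2) : (bottomRow (q, u)).1 i = u * q.out 1 i := rfl
  simp only [eisSummand, hrow, hjsq, hhalf]
  rw [zpow_neg, zpow_neg, zpow_natCast, zpow_natCast, ← two_mul, pow_mul]
  congr 2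
  push_cast
  linear_combination ((q.out 1 0 : ℂ) * z + q.out 1 1) ^ 2 * hu

open EisensteinSeries in
lemma Ewt_eq_E {k : ℕ} (hk : 3 ≤ k) (hk2 : Even k) (z : UpperHalfPlane) :
    Ewt k z = ModularForm.E hk z := by
  have hE : ModularForm.E hk z = (1 / 2 : ℂ) * ∑' x : gammaSet 1 1 0, eisSummand k x z := rfl
  let e := Equiv.ofBijective _ ⟨bottomRow_injective, bottomRow_surjective⟩
  have hsum : HasSum (fun x : Quotient (QuotientGroup.rightRel GammaInf) × ℤˣ ↦
      jsq z x.1 ^ (-((k : ℤ) / 2))) (∑' x : gammaSet 1 1 0, eisSummand k x z) :=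
    (e.hasSum_iff.mpr ((summable_eisSummand hk z).subtype _).hasSum).congr_fun
      fun x ↦ (eisSummand_bottomRow hk2 z x).symm
  rw [hE, ← hsum.tsum_eq, hsum.summable.tsum_prod, Ewt, ← tsum_mul_left]
  refine tsum_congr fun q ↦ ?_
  rw [tsum_fintype]
  simp

/-- The general term of the sum `∑ (cτ+d)⁻ᵏ` over pairs of integers. -/
def eisensteinTerm (k : ℕ) (τ : ℂ) (v : ℤ × ℤ) : ℂ := ((v.1 * τ + v.2) ^ k)⁻¹

/-- The Eisenstein series `∑ (cτ+d)⁻ᵏ` over all pairs of integers, which is `2ζ(k)` times the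
normalised one. -/
def eisensteinSum (k : ℕ) (τ : ℂ) : ℂ := ∑' v, eisensteinTerm k τ v

lemma Ewt_eq_eisensteinSum {k : ℕ} (hk : 3 ≤ k) (hk2 : Even k) {τ : ℂ} (hτ : 0 < τ.im) :
    Ewt k τ = (2 * riemannZeta k)⁻¹ * eisensteinSum k τ := by
  have hζ : riemannZeta k ≠ 0 := riemannZeta_ne_zero_of_one_lt_re <| by norm_cast; omega
  have hE : ModularForm.E hk ⟨τ, hτ⟩ =
      (1 / 2 : ℂ) * eisensteinSeries (N := 1) 0 k ⟨τ, hτ⟩ := rfl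
  have hsum : eisensteinSum k τ = riemannZeta k * eisensteinSeries (N := 1) 0 k ⟨τ, hτ⟩ := by
    rw [← tsum_eisSummand_eq_riemannZeta_mul_eisensteinSeries hk ⟨τ, hτ⟩,
      ← (finTwoArrowEquiv ℤ).symm.tsum_eq]
    exact tsum_congr fun v ↦ by simp [eisensteinTerm, EisensteinSeries.eisSummand]
  rw [hsum, show Ewt k τ = _ from Ewt_eq_E hk hk2 ⟨τ, hτ⟩, hE]
  field_simp

lemma hasSum_eisensteinTerm {k : ℕ} (hk : 3 ≤ k) {τ : ℂ} (hτ : 0 < τ.im) :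
    HasSum (eisensteinTerm k τ) (eisensteinSum k τ) := by
  refine ((summable_prod_eisSummand hk ⟨τ, hτ⟩).congr fun v ↦ ?_).hasSum
  simp [eisensteinTerm, EisensteinSeries.eisSummand]

variable {p k : ℕ} {τ : ℂ}

-- For `p ∤ c` exactly one residue `b` satisfies `cb ≡ e`; for `p ∣ c` all or none do.
lemma ite_dvd_add_sum_range_ite_dvd [Fact p.Prime] (c e : ℤ) :
    (if (p : ℤ) ∣ c then 1 else 0) +
      ∑ b ∈ Finset.range p, (if (p : ℤ) ∣ e - c * b then (1 : ℂ) else 0) =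
      1 + p * if (p : ℤ) ∣ c ∧ (p : ℤ) ∣ e then 1 else 0 := by
  by_cases hc : (p : ℤ) ∣ c
  · have hdvd (b : ℕ) : (p : ℤ) ∣ e - c * b ↔ (p : ℤ) ∣ e := dvd_sub_left (hc.mul_right _)
    by_cases he : (p : ℤ) ∣ e <;> simp [hdvd, hc, he]
  · have hc' : (c : ZMod p) ≠ 0 := by rwa [Ne, ZMod.intCast_zmod_eq_zero_iff_dvd]
    have hdvd : ∀ b ∈ Finset.range p, ((p : ℤ) ∣ e - c * b ↔ b = ((e : ZMod p) / c).val) := by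
      intro b hb
      rw [← ZMod.intCast_zmod_eq_zero_iff_dvd]
      push_cast
      rw [sub_eq_zero, eq_comm, mul_comm, ← eq_div_iff hc']
      refine ⟨fun h ↦ ?_, fun h ↦ ?_⟩
      · rw [← h, ZMod.val_natCast_of_lt (Finset.mem_range.mp hb)]
      · rw [h, ZMod.natCast_zmod_val]
    rw [Finset.sum_congr rfl fun b hb ↦ if_congr (hdvd b hb) rfl rfl,
      Finset.sum_ite_eq', if_pos (Finset.mem_range.mpr (ZMod.val_lt _))]
    simp [hc]

lemma hasSum_ite_dvd_fst (hp : p ≠ 0) (hk : 3 ≤ k) (hτ : 0 < τ.im) :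
    HasSum (fun v ↦ if (p : ℤ) ∣ v.1 then eisensteinTerm k τ v else 0)
      (eisensteinSum k (p * τ)) := by
  rw [hasSum_ite_iff (i := fun v : ℤ × ℤ ↦ ((p : ℤ) * v.1, v.2))]
  · refine (hasSum_eisensteinTerm hk (by rw [im_natCast_mul]; positivity)).congr_fun fun v ↦ ?_
    simp only [eisensteinTerm]
    push_cast
    ring
  · rintro ⟨a, b⟩ ⟨c, d⟩ hv
    simpa [hp] using hv
  · rintro ⟨a, b⟩
    simp [dvd_def, eq_comm]

lemma hasSum_ite_dvd_sub (hp : p ≠ 0) (hk : 3 ≤ k) (hτ : 0 < τ.im) (b : ℕ) :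
    HasSum (fun v ↦ if (p : ℤ) ∣ v.2 - v.1 * b then eisensteinTerm k τ v else 0)
      (((p : ℂ) ^ k)⁻¹ * eisensteinSum k ((τ + b) / p)) := by
  have hp0 : (p : ℂ) ≠ 0 := Nat.cast_ne_zero.mpr hp
  rw [hasSum_ite_iff (i := fun v : ℤ × ℤ ↦ (v.1, v.1 * b + p * v.2))]
  · refine ((hasSum_eisensteinTerm hk
      (by rw [im_add_natCast_div]; positivity)).mul_left _).congr_fun fun v ↦ ?_
    simp only [eisensteinTerm]
    rw [← mul_inv, ← mul_pow]
    push_cast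
    congr 2
    field_simp
    ring
  · rintro ⟨a, b⟩ ⟨c, d⟩ hv
    obtain ⟨rfl, hd⟩ := Prod.mk.inj hv
    simpa [hp] using hd
  · rintro ⟨a, e⟩
    simp [dvd_def, sub_eq_iff_eq_add', eq_comm (b := e)]

lemma hasSum_ite_dvd_and (hp : p ≠ 0) (hk : 3 ≤ k) (hτ : 0 < τ.im) :
    HasSum (fun v ↦ if (p : ℤ) ∣ v.1 ∧ (p : ℤ) ∣ v.2 then eisensteinTerm k τ v else 0)
      (((p : ℂ) ^ k)⁻¹ * eisensteinSum k τ) := by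
  rw [hasSum_ite_iff (i := fun v : ℤ × ℤ ↦ ((p : ℤ) * v.1, (p : ℤ) * v.2))]
  · refine ((hasSum_eisensteinTerm hk hτ).mul_left _).congr_fun fun v ↦ ?_
    simp only [eisensteinTerm]
    rw [← mul_inv, ← mul_pow]
    push_cast
    ring
  · rintro ⟨a, b⟩ ⟨c, d⟩ hv
    simpa [hp] using hv
  · rintro ⟨a, b⟩
    simp [dvd_def, eq_comm]

theorem heckeOp_eisensteinSum [Fact p.Prime] (hk : 3 ≤ k) (hτ : 0 < τ.im) :
    heckeOp p k (eisensteinSum k) τ = ((p : ℂ) ^ (k - 1) + 1) * eisensteinSum k τ := by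
  have hp := (Fact.out : p.Prime).ne_zero
  have hp0 : (p : ℂ) ≠ 0 := Nat.cast_ne_zero.mpr hp
  have hpow : (p : ℂ) ^ k = p ^ (k - 1) * p := (pow_sub_one_mul (by omega) _).symm
  have hleft := (hasSum_ite_dvd_fst hp hk hτ).add
    (hasSum_sum fun b (_ : b ∈ Finset.range p) ↦ hasSum_ite_dvd_sub hp hk hτ b)
  have hright := (hasSum_eisensteinTerm hk hτ).add ((hasSum_ite_dvd_and hp hk hτ).mul_left (p : ℂ))
  have hcount := hleft.unique <| hright.congr_fun fun v ↦ by
    have := congrArg (· * eisensteinTerm k τ v) (ite_dvd_add_sum_range_ite_dvd (p := p) v.1 v.2)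
    simpa only [add_mul, Finset.sum_mul, mul_assoc, ite_mul, one_mul, zero_mul] using this
  rw [← Finset.mul_sum, hpow] at hcount
  rw [heckeOp]
  field_simp at hcount ⊢
  linear_combination hcount

lemma heckeOp_congr (hp : p ≠ 0) (k : ℕ) {f g : ℂ → ℂ} (hfg : ∀ z : ℂ, 0 < z.im → f z = g z)
    (hτ : 0 < τ.im) : heckeOp p k f τ = heckeOp p k g τ := by
  rw [heckeOp, heckeOp, hfg _ (by rw [im_natCast_mul]; positivity),
    Finset.sum_congr rfl fun b _ ↦ hfg _ (by rw [im_add_natCast_div]; positivity)]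

theorem heckeOp_Ewt [Fact p.Prime] (hk : 3 ≤ k) (hk2 : Even k) (hτ : 0 < τ.im) :
    heckeOp p k (Ewt k) τ = ((p : ℂ) ^ (k - 1) + 1) * Ewt k τ := by
  rw [heckeOp_congr (Fact.out : p.Prime).ne_zero k (fun z hz ↦ Ewt_eq_eisensteinSum hk hk2 hz) hτ,
    heckeOp_const_mul, heckeOp_eisensteinSum hk hτ, Ewt_eq_eisensteinSum hk hk2 hτ]
  ring

end Eisenstein

section Growth

open UpperHalfPlane Filter ModularForm

lemma slash_eq_self_of_generators {k : ℕ} {f : ℂ → ℂ} (hper : ∀ τ : ℂ, f (τ + 1) = f τ)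
    (hinv : ∀ τ : ℂ, 0 < τ.im → f (-1 / τ) = τ ^ k * f τ) (γ : SL(2, ℤ)) :
    (fun z : ℍ ↦ f z) ∣[(k : ℤ)] γ = fun z : ℍ ↦ f z := by
  refine SlashInvariantForm.slash_action_generators_SL2Z ?_ ?_ γ
  · ext z
    rw [ModularForm.SL_slash_apply, UpperHalfPlane.modular_S_smul, ModularGroup.denom_S, zpow_neg,
      zpow_natCast, mul_inv_eq_iff_eq_mul₀ (pow_ne_zero _ z.ne_zero), mul_comm]
    simpa only [neg_div, one_div, ← inv_neg] using hinv z z.im_pos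
  · ext z
    have hdenom : denom (ModularGroup.T : GL (Fin 2) ℝ) z = 1 := by
      rw [ModularGroup.denom_apply]
      simp [ModularGroup.T]
    rw [ModularForm.SL_slash_apply, UpperHalfPlane.modular_T_smul, hdenom]
    simp [add_comm, hper]

/-- The modular form of level one given by a holomorphic function on the upper half-plane which
transforms as in weight `k` under `τ ↦ τ + 1` and `τ ↦ -1/τ`, and has a limit at `i∞`. -/
def levelOneForm {k : ℕ} {f : ℂ → ℂ} {c : ℂ} (hper : ∀ τ : ℂ, f (τ + 1) = f τ)
    (hinv : ∀ τ : ℂ, 0 < τ.im → f (-1 / τ) = τ ^ k * f τ)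
    (hdiff : DifferentiableOn ℂ f {τ | 0 < τ.im})
    (hlim : Tendsto f (comap Complex.im atTop) (nhds c)) : ModularForm 𝒮ℒ k where
  toFun z := f z
  slash_action_eq' := by
    rintro _ ⟨γ, rfl⟩
    exact slash_eq_self_of_generators hper hinv γ
  holo' := by
    rw [UpperHalfPlane.mdifferentiable_iff]
    refine hdiff.congr fun z hz ↦ ?_
    simp [UpperHalfPlane.ofComplex_apply_of_im_pos hz]
  bdd_at_cusps' hc := by
    rw [OnePoint.isBoundedAt_iff_forall_SL2Z hc]
    intro γ _
    rw [slash_eq_self_of_generators hper hinv]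
    exact (hlim.comp UpperHalfPlane.tendsto_coe_atImInfty).isBigO_one ℝ

-- The difference is a cusp form, as `E` has constant term `1`.
lemma exists_norm_sub_Ewt_le {j : ℕ} (hk : 3 ≤ 2 * j) {f : ℂ → ℂ} {c : ℂ}
    (hper : ∀ τ : ℂ, f (τ + 1) = f τ)
    (hinv : ∀ τ : ℂ, 0 < τ.im → f (-1 / τ) = τ ^ (2 * j) * f τ)
    (hdiff : DifferentiableOn ℂ f {τ | 0 < τ.im})
    (hlim : Tendsto f (comap Complex.im atTop) (nhds c)) :
    ∃ C : ℝ, ∀ τ : ℂ, 0 < τ.im → ‖f τ - c * Ewt (2 * j) τ‖ ≤ C / τ.im ^ j := by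
  let F := levelOneForm hper hinv hdiff hlim
  have hcoeff : (qExpansion 1 F).coeff 0 = c := by
    rw [qExpansion_coeff_zero one_pos
      (ModularFormClass.analyticAt_cuspFunction_zero _ one_pos one_mem_strictPeriods_SL)
      (SlashInvariantFormClass.periodic_comp_ofComplex _ one_mem_strictPeriods_SL)]
    exact (hlim.comp tendsto_coe_atImInfty).limUnder_eq
  obtain ⟨g, hg⟩ := ModularForm.sub_smul_isCuspForm F (ModularForm.E hk)
    (EisensteinSeries.E_qExpansion_coeff_zero hk (even_two_mul j))
  obtain ⟨C, hC⟩ := CuspFormClass.exists_bound g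
  refine ⟨C, fun τ hτ ↦ ?_⟩
  have hval : g ⟨τ, hτ⟩ = f τ - c * Ewt (2 * j) τ := by
    have hgτ := DFunLike.congr_fun hg ⟨τ, hτ⟩
    rw [CuspForm.toModularFormₗ_apply, hcoeff] at hgτ
    rw [hgτ, show Ewt (2 * j) τ = _ from Ewt_eq_E hk (even_two_mul j) ⟨τ, hτ⟩]
    rfl
  have hweight : (((2 * j : ℕ) : ℤ) : ℝ) / 2 = j := by push_cast; ring
  have hgC := hC ⟨τ, hτ⟩
  rwa [hval, hweight, Real.rpow_natCast] at hgC

lemma exists_norm_sum_thetaSeries_sub_Ewt_le {m : ℕ} {R : Finset (Matrix (Fin m) (Fin m) ℤ)}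
    (hR : ∀ S ∈ R, IsPosDefEvenUnimodular S) (w : Matrix (Fin m) (Fin m) ℤ → ℂ) {j : ℕ}
    (hm : m = 2 * (2 * j)) (hj : Even j) (hj0 : 0 < j) :
    ∃ C : ℝ, ∀ τ : ℂ, 0 < τ.im →
      ‖∑ S ∈ R, w S * thetaSeries S τ - (∑ S ∈ R, w S) * Ewt (2 * j) τ‖ ≤ C / τ.im ^ j := by
  have hk : 4 ∣ 2 * j := mul_dvd_mul_left 2 hj.two_dvd
  refine exists_norm_sub_Ewt_le (by omega) (fun τ ↦ ?_) (fun τ hτ ↦ ?_) ?_ ?_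
  · exact Finset.sum_congr rfl fun S hS ↦ by
      rw [thetaSeries_add_one (hR S hS).1 (hR S hS).2.2.2]
  · rw [Finset.mul_sum]
    refine Finset.sum_congr rfl fun S hS ↦ ?_
    rw [thetaSeries_neg_one_div (hR S hS) hm hk hτ, mul_left_comm]
  · exact DifferentiableOn.fun_sum fun S hS ↦
      (differentiableOn_thetaSeries (hR S hS).2.1).const_mul _
  · simpa using tendsto_finsetSum R fun S hS ↦
      (tendsto_thetaSeries (hR S hS).2.1).const_mul (w S)

variable {p j : ℕ} {g : ℂ → ℂ} {C : ℝ} {τ : ℂ}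

lemma norm_heckeOp_le (hp : p ≠ 0) (hg : ∀ τ : ℂ, 0 < τ.im → ‖g τ‖ ≤ C / τ.im ^ j)
    (hτ : 0 < τ.im) :
    ‖heckeOp p (2 * j) g τ‖ ≤ ((p : ℝ) ^ (j - 1) + (p : ℝ) ^ j) * (C / τ.im ^ j) := by
  have hmul : ‖g (p * τ)‖ ≤ ((p : ℝ) ^ j)⁻¹ * (C / τ.im ^ j) := by
    refine (hg _ (by rw [im_natCast_mul]; positivity)).trans_eq ?_
    rw [im_natCast_mul, mul_pow]
    field_simp
  have hdiv (b : ℕ) : ‖g ((τ + b) / p)‖ ≤ (p : ℝ) ^ j * (C / τ.im ^ j) := by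
    refine (hg _ (by rw [im_add_natCast_div]; positivity)).trans_eq ?_
    rw [im_add_natCast_div, div_pow]
    field_simp
  have hsum := norm_sum_le_of_le (Finset.range p) fun b _ ↦ hdiv b
  rw [Finset.sum_const, Finset.card_range, nsmul_eq_mul] at hsum
  have hpow : (p : ℝ) ^ (2 * j - 1) = p ^ (j - 1) * p ^ j := by rw [← pow_add]; congr 1; omega
  calc ‖heckeOp p (2 * j) g τ‖
      ≤ ‖(p : ℂ) ^ (2 * j - 1) * g (p * τ)‖ +
          ‖(p : ℂ)⁻¹ * ∑ b ∈ Finset.range p, g ((τ + b) / p)‖ := norm_add_le _ _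
    _ ≤ (p : ℝ) ^ (2 * j - 1) * (((p : ℝ) ^ j)⁻¹ * (C / τ.im ^ j)) +
          (p : ℝ)⁻¹ * (p * ((p : ℝ) ^ j * (C / τ.im ^ j))) := by
        simp only [norm_mul, norm_inv, norm_pow, Complex.norm_natCast]
        gcongr
    _ = _ := by
        rw [hpow]
        field_simp

lemma eq_zero_of_heckeOp_eq_mul (hp : p ≠ 0) {l : ℂ}
    (hg : ∀ τ : ℂ, 0 < τ.im → ‖g τ‖ ≤ C / τ.im ^ j) (hl : (p : ℝ) ^ (j - 1) + (p : ℝ) ^ j < ‖l‖)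
    (heig : ∀ τ : ℂ, 0 < τ.im → heckeOp p (2 * j) g τ = l * g τ) (hτ : 0 < τ.im) : g τ = 0 := by
  set B : ℝ := (p : ℝ) ^ (j - 1) + (p : ℝ) ^ j
  have hB0 : 0 ≤ B := by positivity
  have hl0 : 0 < ‖l‖ := hB0.trans_lt hl
  -- Applying `T_p` improves the constant by the factor `B / ‖l‖ < 1`.
  have hiter (n : ℕ) : ∀ τ : ℂ, 0 < τ.im → ‖g τ‖ ≤ (B / ‖l‖) ^ n * C / τ.im ^ j := by
    induction n with
    | zero => simpa using hg
    | succ n ih =>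
      intro τ hτ
      have h := norm_heckeOp_le hp ih hτ
      rw [heig τ hτ, norm_mul, mul_comm, ← le_div_iff₀ hl0] at h
      exact h.trans_eq (by rw [pow_succ]; ring)
  have hlim : Tendsto (fun n : ℕ ↦ (B / ‖l‖) ^ n * C / τ.im ^ j) atTop (nhds 0) := by
    simpa using ((tendsto_pow_atTop_nhds_zero_of_lt_one (by positivity)
      ((div_lt_one hl0).mpr hl)).mul_const C).div_const (τ.im ^ j)
  exact norm_le_zero_iff.mp (ge_of_tendsto' hlim fun n ↦ hiter n τ hτ)

lemma pow_add_pow_lt_norm (hp : 2 < p) (hj : 2 ≤ j) :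
    (p : ℝ) ^ (j - 1) + (p : ℝ) ^ j < ‖(p : ℂ) ^ (2 * j - 1) + 1‖ := by
  have hp' : (2 : ℝ) < p := by exact_mod_cast hp
  have hnorm : ‖(p : ℂ) ^ (2 * j - 1) + 1‖ = (p : ℝ) ^ (j - 1) * p ^ j + 1 := by
    rw [← pow_add, show j - 1 + j = 2 * j - 1 by omega]
    exact_mod_cast Complex.norm_natCast (p ^ (2 * j - 1) + 1)
  have hj1 : 2 < (p : ℝ) ^ (j - 1) := hp'.trans_le (le_self_pow₀ (by linarith) (by omega))
  have hj2 : (p : ℝ) ^ (j - 1) ≤ p ^ j := pow_le_pow_right₀ (by linarith) (Nat.sub_le j 1)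
  rw [hnorm]
  nlinarith

end Growth

/-- Siegel's formula in degree 1: for `8 ∣ m` and `R` a complete set of representatives of
the equivalence classes of positive definite even unimodular `m × m` matrices,
`∑_{S ∈ R} (1/g_S) θ_S(τ) = M_m E_{m/2}(τ)` on `ℍ`, where `M_m = ∑_{S ∈ R} 1/g_S` and
`E_{m/2}(τ) = ∑_{γ ∈ Γ∞\SL₂(ℤ)} j(γ,τ)^{-m/2}`. -/
theorem siegel_formula_degree_one (m : ℕ) (hm : 0 < m) (hm8 : 8 ∣ m)
    (R : Finset (Matrix (Fin m) (Fin m) ℤ))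
    (hR : ∀ S ∈ R, IsPosDefEvenUnimodular S)
    (huniq : ∀ S ∈ R, ∀ S' ∈ R, MatEquiv S S' → S = S')
    (hrep : ∀ T : Matrix (Fin m) (Fin m) ℤ, IsPosDefEvenUnimodular T → ∃ S ∈ R, MatEquiv S T) :
    ∀ τ ∈ UHP,
      ∑ S ∈ R, (autCard S : ℂ)⁻¹ * thetaSeries S τ
        = (∑ S ∈ R, (autCard S : ℂ)⁻¹) * Ewt (m / 2) τ := by
  intro τ hτ
  obtain ⟨n, rfl⟩ := hm8
  have hrepr : IsClassRepresentatives R := ⟨hR, huniq, hrep⟩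
  have hm' : 8 * n = 2 * (2 * (2 * n)) := by ring
  have hk : 3 ≤ 2 * (2 * n) := by omega
  have : Fact (Nat.Prime 3) := ⟨Nat.prime_three⟩
  obtain ⟨C, hC⟩ := exists_norm_sum_thetaSeries_sub_Ewt_le hR (fun S ↦ (autCard S : ℂ)⁻¹) hm'
    (even_two_mul n) (by omega)
  rw [show 8 * n / 2 = 2 * (2 * n) by omega]
  refine sub_eq_zero.mp (eq_zero_of_heckeOp_eq_mul (τ := τ) three_ne_zero hC
    (pow_add_pow_lt_norm (by norm_num) (by omega)) (fun z hz ↦ ?_) hτ)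
  rw [heckeOp_sub, heckeOp_const_mul, heckeOp_Ewt hk (even_two_mul _) hz,
    hrepr.heckeOp_sum_thetaSeries (by norm_num) hm' (by omega) (even_two_mul _) hz]
  ring

end
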